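/- arXiv:1707.02953 — 2 statements merged into one kernel-verified Lean document; each statement's English description precedes it below -/
import Mathlib

section
/- Every finite simple graph with maximum degree at most 4 admits a string contact representation in ℝ³ of complexity at most 4, i.e., one in which every string is a B₄-string. -/
open Set

/-- Points of ℝ³, identified with triples of real numbers. -/
abbrev Pt3 : Type := Fin 3 → ℝ

/-- A vector is parallel to a coordinate axis if at most one of its
three coordinates is nonzero. -/
def AxisParallel (v : Pt3) : Prop := ∃ i : Fin 3, ∀ j : Fin 3, j ≠ i → v j = 0

/-- An axis-aligned string in ℝ³: a simple polygonal path `pts 0, pts 1, …, pts k`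
(`k ≥ 1`) with consecutive points distinct, each difference parallel to a coordinate
axis, and the path non-self-intersecting (consecutive segments meet exactly at their
common endpoint and non-consecutive segments are disjoint). -/
structure AAString where
  k : ℕ
  pts : Fin (k + 1) → Pt3
  k_pos : 1 ≤ k
  consec_ne : ∀ i : Fin k, pts i.castSucc ≠ pts i.succ
  axis : ∀ i : Fin k, AxisParallel (pts i.succ - pts i.castSucc)
  simple_consec : ∀ i j : Fin k, (i : ℕ) + 1 = (j : ℕ) →
    segment ℝ (pts i.castSucc) (pts i.succ) ∩ segment ℝ (pts j.castSucc) (pts j.succ)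
      = {pts i.succ}
  simple_far : ∀ i j : Fin k, (i : ℕ) + 1 < (j : ℕ) →
    segment ℝ (pts i.castSucc) (pts i.succ) ∩ segment ℝ (pts j.castSucc) (pts j.succ) = ∅

/-- The string, as a subset of ℝ³: the union of its closed segments. -/
def AAString.carrier (S : AAString) : Set Pt3 :=
  ⋃ i : Fin S.k, segment ℝ (S.pts i.castSucc) (S.pts i.succ)

/-- The two endpoints of the string. -/
def AAString.endpoints (S : AAString) : Set Pt3 := {S.pts 0, S.pts (Fin.last S.k)}

/-- The number of bends of the string: one less than its number of segments. -/
def AAString.bends (S : AAString) : ℕ := S.k - 1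

/-- A string contact representation of a simple graph `G`: two distinct strings meet
only at endpoints of one of them, no point lies on three distinct strings, and two
strings intersect iff the corresponding vertices are adjacent. -/
def IsStringContactRep {V : Type*} (G : SimpleGraph V) (Ψ : V → AAString) : Prop :=
  (∀ u v : V, u ≠ v → ∀ p ∈ (Ψ u).carrier ∩ (Ψ v).carrier,
      p ∈ (Ψ u).endpoints ∪ (Ψ v).endpoints) ∧
  (∀ u v w : V, u ≠ v → u ≠ w → v ≠ w →
      ∀ p : Pt3, ¬ (p ∈ (Ψ u).carrier ∧ p ∈ (Ψ v).carrier ∧ p ∈ (Ψ w).carrier)) ∧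
  (∀ u v : V, u ≠ v → (((Ψ u).carrier ∩ (Ψ v).carrier).Nonempty ↔ G.Adj u v))

/-!
By Hall's theorem the edges of `G` can be oriented with out-degrees at most `2`, so that they are
the arcs of two functional graphs `f` and `g`. The string of a vertex `v` is a vertical pole above
`(X v, Y v)` whose top and bottom continue along horizontal elbows that end on the poles of `f v`
and `g v`. The upper elbow of `v` reaches the pole of `f v` if that pole is at least as high as the
one of `v`, so let the heights increase weakly along the arcs of `f`, and agree only on its cycles;
proceed likewise below. Since elbows in different planes do not meet, it remains to draw each cycle
of `f` in a plane without crossings. This works if `X` increases along the cycle, starting from a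
cut vertex at which `Y` is minimal. For `g` the roles of `X` and `Y` are exchanged.

To meet both conditions, `R` is chosen to contain one vertex of each terminal strongly connected
component of the orientation, and `f v`, for `v` outside `R`, is an out-neighbour of `v` on a
shortest path to `R`. The order `X` starts with `R` and then increases along `f`. The cycles of `g`
are cut where `X` is minimal; `Y` starts with these cut vertices, in the order of `X`, and then
increases along `g`. A vertex of `R` has the least `X` among all vertices that it reaches, hence
also the least `Y`.
-/

open Relation (ReflTransGen)

section Order

variable {α : Type*} [Finite α]

lemma exists_injective_monotone_nat [PartialOrder α] :
    ∃ φ : α → ℕ, φ.Injective ∧ Monotone φ := by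
  have : Fintype (LinearExtension α) := Fintype.ofFinite α
  let e := Fintype.orderIsoFinOfCardEq (LinearExtension α) rfl
  exact ⟨fun a => e.symm (toLinearExtension a),
    Fin.val_injective.comp <| e.symm.injective.comp Function.injective_id,
    fun a b hab => e.symm.monotone (toLinearExtension.monotone hab)⟩

lemma exists_injective_strictMono_nat [Preorder α] :
    ∃ φ : α → ℕ, φ.Injective ∧ StrictMono φ := by
  obtain ⟨φ, hφ, hmono⟩ := @exists_injective_monotone_nat α _ (partialOrderOfSO (· < ·))
  exact ⟨φ, hφ, fun a b hab => (hmono (Or.inr hab)).lt_of_ne (hφ.ne hab.ne)⟩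

lemma exists_monotone_nat_antisymmRel [Preorder α] :
    ∃ φ : α → ℕ, Monotone φ ∧ ∀ a b, φ a = φ b → AntisymmRel (· ≤ ·) a b := by
  have : Finite (Antisymmetrization α (· ≤ ·)) := Quotient.finite _
  obtain ⟨φ, hφ, hmono⟩ := exists_injective_monotone_nat (α := Antisymmetrization α (· ≤ ·))
  exact ⟨φ ∘ toAntisymmetrization (· ≤ ·), hmono.comp toAntisymmetrization_mono,
    fun a b hab => Quotient.exact (hφ hab)⟩

lemma exists_isCofinal_isAntichain [Preorder α] :
    ∃ R : Set α, IsCofinal R ∧ IsAntichain (· ≤ ·) R := by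
  let rep (a : α) : α := ofAntisymmetrization (· ≤ ·) (toAntisymmetrization (· ≤ ·) a)
  have le_rep (a : α) : a ≤ rep a := (toAntisymmetrization_le_toAntisymmetrization_iff.1
    (toAntisymmetrization_ofAntisymmetrization (· ≤ ·) _).ge)
  refine ⟨rep '' {m | IsMax m}, fun a => ?_, ?_⟩
  · obtain ⟨m, ham, hm⟩ := Finite.exists_le_maximal (p := fun _ : α => True) (a := a) trivial
    exact ⟨rep m, ⟨m, fun b hb => hm.2 trivial hb, rfl⟩, ham.trans (le_rep m)⟩
  · rintro _ ⟨m, hm, rfl⟩ _ ⟨n, hn, rfl⟩ hne hle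
    have hmn : m ≤ rep n := (le_rep m).trans hle
    have hnr : rep n ≤ m := hm hmn
    exact hne (congrArg (ofAntisymmetrization (· ≤ ·))
      (Quotient.sound ⟨hmn.trans (hn (le_rep n)), (le_rep n).trans hnr⟩))

end Order

section Reachability

variable {V : Type*} (r : V → V → Prop)

/-- The preorder in which `v ≤ w` means that `w` can be reached from `v` along `r`. -/
abbrev reachabilityPreorder : Preorder V where
  le := ReflTransGen r
  le_refl _ := .refl
  le_trans _ _ _ := .trans

variable {r}

lemma exists_nat_decreasing_of_reflTransGen {R : Set V} (hR : ∀ v, ∃ w ∈ R, ReflTransGen r v w) :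
    ∃ d : V → ℕ, ∀ v ∉ R, ∃ w, r v w ∧ d w < d v := by
  classical
  let S (n : ℕ) : Set V := (fun T => {v | ∃ w ∈ T, r v w})^[n] R
  have S_succ (n : ℕ) : S (n + 1) = {v | ∃ w ∈ S n, r v w} := Function.iterate_succ_apply' ..
  have mem_S (v : V) : ∃ n, v ∈ S n := by
    obtain ⟨w, hw, hvw⟩ := hR v
    induction hvw using ReflTransGen.head_induction_on with
    | refl => exact ⟨0, hw⟩
    | head hab _ ih =>
      obtain ⟨n, hn⟩ := ih
      exact ⟨n + 1, S_succ n ▸ ⟨_, hn, hab⟩⟩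
  refine ⟨fun v => Nat.find (mem_S v), fun v hv => ?_⟩
  have hspec := Nat.find_spec (mem_S v)
  obtain ⟨n, hn⟩ : ∃ n, Nat.find (mem_S v) = n + 1 :=
    Nat.exists_eq_succ_of_ne_zero fun h0 => hv (by rwa [h0] at hspec)
  rw [hn, S_succ] at hspec
  obtain ⟨w, hw, hvw⟩ := hspec
  exact ⟨w, hvw, by grind [Nat.find_min' (mem_S w) hw]⟩

lemma exists_injective_nat_increasing_toward [Finite V] {R : Set V}
    (hR : ∀ v, ∃ w ∈ R, ReflTransGen r v w) (Z : V → ℕ) :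
    ∃ X : V → ℕ, X.Injective ∧ (∀ u ∈ R, ∀ v ∈ R, Z u < Z v → X u < X v) ∧
      (∀ u ∈ R, ∀ v ∉ R, X u < X v) ∧ ∀ v ∉ R, ∃ w, r v w ∧ (w ∉ R → X v < X w) := by
  classical
  obtain ⟨d, hd⟩ := exists_nat_decreasing_of_reflTransGen hR
  let key (v : V) : ℕ ⊕ₗ ℕᵒᵈ :=
    if v ∈ R then Sum.inlₗ (Z v) else Sum.inrₗ (OrderDual.toDual (d v))
  obtain ⟨X, hX, hmono⟩ := @exists_injective_strictMono_nat V _ (Preorder.lift key)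
  refine ⟨X, hX, fun u hu v hv huv => hmono ?_, fun u hu v hv => hmono ?_, fun v hv => ?_⟩
  · change key u < key v
    simpa [key, hu, hv] using huv
  · change key u < key v
    simp [key, hu, hv]
  · obtain ⟨w, hvw, hlt⟩ := hd v hv
    refine ⟨w, hvw, fun hw => hmono ?_⟩
    change key v < key w
    simpa [key, hv, hw] using hlt

end Reachability

section FunctionalGraph

variable {V : Type*} {f : V → Option V} {R : Set V} {X Y : V → ℕ} {u v w u' v' : V}

/-- Reachability along the arcs `v → w`, `f v = some w`, of the functional graph of `f`. -/
abbrev Reaches (f : V → Option V) : V → V → Prop :=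
  ReflTransGen fun v w => f v = some w

/-- Reachability in the functional graph of `f` along arcs whose head is not in `R`. -/
abbrev ReachesAvoiding (f : V → Option V) (R : Set V) : V → V → Prop :=
  ReflTransGen fun v w => f v = some w ∧ w ∉ R

/-- `R` cuts every cycle of the functional graph of `f` in a single vertex `r`: on the path that
runs once around the cycle from `r`, the values of `X` increase and those of `Y` stay above `Y r`.
This makes it possible to draw the arcs of the cycle as elbows in one plane. -/
structure CutsCycles (f : V → Option V) (R : Set V) (X Y : V → ℕ) : Prop where
  lt_of_arc : ∀ {v w}, f v = some w → w ∉ R → X v < X w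
  lt_of_reaches : ∀ {r v}, r ∈ R → Reaches f r v → v ≠ r → Y r < Y v

lemma Reaches.of_arc (hvw : Reaches f v w) (hne : v ≠ w) (hv : f v = some v') :
    Reaches f v' w := by
  obtain ⟨a, ha, haw⟩ := hvw.cases_head.resolve_left hne
  rwa [Option.some_injective _ (hv.symm.trans ha)]

lemma Reaches.avoiding_or_exists (h : Reaches f u v) :
    ReachesAvoiding f R u v ∨ ∃ r ∈ R, Reaches f u r ∧ Reaches f r v := by
  induction h with
  | refl => exact .inl .refl
  | @tail b c hub hbc ih =>
    by_cases hc : c ∈ R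
    · exact .inr ⟨c, hc, hub.tail hbc, .refl⟩
    · exact ih.imp (·.tail ⟨hbc, hc⟩) fun ⟨r, hr, hur, hrb⟩ => ⟨r, hr, hur, hrb.tail hbc⟩

namespace CutsCycles

lemma le_of_reachesAvoiding (H : CutsCycles f R X Y) (h : ReachesAvoiding f R u v) :
    X u ≤ X v := by
  induction h with
  | refl => rfl
  | tail _ hbc ih => exact ih.trans (H.lt_of_arc hbc.1 hbc.2).le

lemma le_of_reaches (H : CutsCycles f R X Y) {r : V} (hr : r ∈ R) (h : Reaches f r v) :
    Y r ≤ Y v := by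
  obtain rfl | hv := eq_or_ne v r
  exacts [le_rfl, (H.lt_of_reaches hr h hv).le]

lemma eq_of_antisymmRel (H : CutsCycles f R X Y) (hu : u ∈ R) (hv : v ∈ R)
    (h : AntisymmRel (Reaches f) u v) : u = v := by
  by_contra hne
  exact (H.lt_of_reaches hu h.1 (Ne.symm hne)).not_ge (H.le_of_reaches hv h.2)

lemma reachesAvoiding_of_antisymmRel (H : CutsCycles f R X Y) (hu : u ∈ R)
    (h : AntisymmRel (Reaches f) u v) : ReachesAvoiding f R u v := by
  obtain ⟨huv, hvu⟩ := h
  induction huv with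
  | refl => exact .refl
  | @tail b c hub hbc ih =>
    by_cases hc : c ∈ R
    · rw [H.eq_of_antisymmRel hu hc ⟨hub.tail hbc, hvu⟩]
    · exact (ih (hvu.head hbc)).tail ⟨hbc, hc⟩

lemma reachesAvoiding_total (H : CutsCycles f R X Y) (h : AntisymmRel (Reaches f) u v) :
    ReachesAvoiding f R u v ∨ ReachesAvoiding f R v u := by
  obtain huv | ⟨r, hr, hur, hrv⟩ := Reaches.avoiding_or_exists (R := R) h.1
  · exact .inl huv
  · have hru : ReachesAvoiding f R r u := H.reachesAvoiding_of_antisymmRel hr ⟨hrv.trans h.2, hur⟩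
    have hrv : ReachesAvoiding f R r v := H.reachesAvoiding_of_antisymmRel hr ⟨hrv, h.2.trans hur⟩
    exact ReflTransGen.total_of_right_unique
      (fun _ _ _ hb hc => Option.some_injective _ (hb.1.symm.trans hc.1)) hru hrv

lemma target_ne_target (H : CutsCycles f R X Y) (huv : u ≠ v)
    (h : AntisymmRel (Reaches f) u v) (hu : f u = some u') (hv : f v = some v') : u' ≠ v' := by
  wlog huv' : ReachesAvoiding f R u v generalizing u v u' v'
  · exact (this huv.symm h.symm hv hu ((H.reachesAvoiding_total h).resolve_left huv')).symm
  rintro rfl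
  obtain ⟨w, ⟨hw, hwR⟩, hwv⟩ := huv'.cases_head.resolve_left huv
  obtain rfl : w = u' := Option.some_injective _ (hw.symm.trans hu)
  exact (H.lt_of_arc hv hwR).not_ge (H.le_of_reachesAvoiding hwv)

/-- If `v'` is not the cut vertex, then `v` and `v'` are consecutive in the `X`-order of the cycle;
if it is, then `Y v'` is strictly minimal. -/
lemma target_eq_of_mem_uIcc (H : CutsCycles f R X Y) (hX : X.Injective) (hY : Y.Injective)
    (huv : u ≠ v) (h : AntisymmRel (Reaches f) u v) (hu : f u = some u') (hv : f v = some v')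
    (hXu : X u ∈ uIcc (X v) (X v')) (hYv : Y v' ∈ uIcc (Y u) (Y u')) : v' = u := by
  by_cases hv'R : v' ∈ R
  · have hv'u : Reaches f v' u := h.2.of_arc huv.symm hv
    have hYu : Y v' ≤ Y u := H.le_of_reaches hv'R hv'u
    have hYu' : Y v' ≤ Y u' := H.le_of_reaches hv'R (hv'u.tail hu)
    obtain hY' | hY' : Y v' = Y u ∨ Y v' = Y u' := by grind [mem_uIcc]
    · exact hY hY'
    · exact absurd (hY hY').symm (H.target_ne_target huv h hu hv)
  · have hlt := H.lt_of_arc hv hv'R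
    rw [uIcc_of_le hlt.le] at hXu
    obtain huv' | hvu := H.reachesAvoiding_total h
    · exact absurd (hX (hXu.1.antisymm' (H.le_of_reachesAvoiding huv'))) huv
    · obtain ⟨w, ⟨hw, -⟩, hwu⟩ := hvu.cases_head.resolve_left huv.symm
      obtain rfl : w = v' := Option.some_injective _ (hw.symm.trans hv)
      exact hX ((H.le_of_reachesAvoiding hwu).antisymm hXu.2)

end CutsCycles

end FunctionalGraph

section Elbow

/-- The planar path that runs from `(x, y)` vertically to `(x, y')` and then horizontally to
`(x', y')`. -/
def elbow (x y x' y' : ℝ) : Set (ℝ × ℝ) :=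
  {q | q.1 = x ∧ q.2 ∈ uIcc y y' ∨ q.1 ∈ uIcc x x' ∧ q.2 = y'}

variable {V : Type*} {f : V → Option V} {R : Set V} {X Y : V → ℕ} {u v : V}

/-- The `X`-coordinate of the vertex `f v`, or the unoccupied coordinate `-1` if `v` has no arc. -/
def targetCoord (f : V → Option V) (X : V → ℕ) (v : V) : ℝ :=
  (f v).elim (-1) fun w => X w

lemma targetCoord_eq_natCast_iff (hX : X.Injective) : targetCoord f X u = X v ↔ f u = some v := by
  cases hu : f u with
  | none => simpa [targetCoord, hu] using (neg_one_lt_zero.trans_le (X v).cast_nonneg).ne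
  | some w => simp [targetCoord, hu, hX.eq_iff]

/-- The elbow that draws the arc `v → f v` when each vertex `w` is placed at `(X w, Y w)`. -/
def arcElbow (f : V → Option V) (X Y : V → ℕ) (v : V) : Set (ℝ × ℝ) :=
  elbow (X v) (Y v) (targetCoord f X v) (targetCoord f Y v)

lemma arc_of_mem_arcElbow (hX : X.Injective) (hY : Y.Injective) (huv : u ≠ v)
    (h : ((X v : ℝ), (Y v : ℝ)) ∈ arcElbow f X Y u) : f u = some v := by
  obtain ⟨hx, -⟩ | ⟨-, hy⟩ := h
  · exact absurd (hX (Nat.cast_injective hx)).symm huv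
  · exact (targetCoord_eq_natCast_iff hY).1 hy.symm

/-- The vertices of the functional graph of `f` are placed at `(X v, Y v)` and their elbows at
height `h v`, in such a way that heights increase weakly along arcs, and elbows in the same plane
meet only where one of them ends at the vertex of the other. -/
structure IsLayered (f : V → Option V) (X Y h : V → ℕ) : Prop where
  le_of_arc : ∀ {u v}, f u = some v → h u ≤ h v
  contact : ∀ {u v q}, u ≠ v → h u = h v → q ∈ arcElbow f X Y u → q ∈ arcElbow f X Y v →
    (f u = some v ∧ q = ((X v : ℝ), (Y v : ℝ))) ∨ (f v = some u ∧ q = ((X u : ℝ), (Y u : ℝ)))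

lemma CutsCycles.arc_of_crossing (H : CutsCycles f R X Y) (hX : X.Injective) (hY : Y.Injective)
    (huv : u ≠ v) (h : AntisymmRel (Reaches f) u v)
    (hx : (X u : ℝ) ∈ uIcc (X v : ℝ) (targetCoord f X v))
    (hy : targetCoord f Y v ∈ uIcc (Y u : ℝ) (targetCoord f Y u)) : f v = some u := by
  obtain ⟨u', hu, -⟩ := h.1.cases_head.resolve_left huv
  obtain ⟨v', hv, -⟩ := h.2.cases_head.resolve_left huv.symm
  simp only [(targetCoord_eq_natCast_iff hX).2 hv, (targetCoord_eq_natCast_iff hY).2 hv,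
    (targetCoord_eq_natCast_iff hY).2 hu, mem_uIcc, Nat.cast_le] at hx hy
  rw [hv, H.target_eq_of_mem_uIcc hX hY huv h hu hv (mem_uIcc.2 hx) (mem_uIcc.2 hy)]

lemma CutsCycles.contact (H : CutsCycles f R X Y) (hX : X.Injective) (hY : Y.Injective)
    (huv : u ≠ v) (h : AntisymmRel (Reaches f) u v) {q : ℝ × ℝ}
    (hqu : q ∈ arcElbow f X Y u) (hqv : q ∈ arcElbow f X Y v) :
    (f u = some v ∧ q = ((X v : ℝ), (Y v : ℝ))) ∨ (f v = some u ∧ q = ((X u : ℝ), (Y u : ℝ))) := by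
  obtain ⟨x, y⟩ := q
  obtain ⟨rfl, hyu⟩ | ⟨hxu, rfl⟩ := hqu <;> obtain ⟨hxv, hyv⟩ | ⟨hxv, hyv⟩ := hqv
  · exact absurd (hX (Nat.cast_injective hxv)) huv
  · have hvu := H.arc_of_crossing hX hY huv h hxv (hyv ▸ hyu)
    exact .inr ⟨hvu, Prod.ext rfl (hyv.trans ((targetCoord_eq_natCast_iff hY).2 hvu))⟩
  · have huv := H.arc_of_crossing hX hY huv.symm h.symm (hxv ▸ hxu) hyv
    exact .inl ⟨huv, Prod.ext hxv ((targetCoord_eq_natCast_iff hY).2 huv)⟩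
  · obtain ⟨u', hu, -⟩ := h.1.cases_head.resolve_left huv
    obtain ⟨v', hv, -⟩ := h.2.cases_head.resolve_left huv.symm
    dsimp only at hyv
    rw [(targetCoord_eq_natCast_iff hY).2 hv, targetCoord_eq_natCast_iff hY, hu] at hyv
    exact absurd (Option.some_injective _ hyv) (H.target_ne_target huv h hu hv)

lemma CutsCycles.exists_isLayered [Finite V] (H : CutsCycles f R X Y) (hX : X.Injective)
    (hY : Y.Injective) : ∃ h, IsLayered f X Y h := by
  obtain ⟨h, hmono, hcyc⟩ :=
    @exists_monotone_nat_antisymmRel V _ (reachabilityPreorder fun v w => f v = some w)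
  exact ⟨h, fun huv => hmono (.single huv), fun huv he => H.contact hX hY huv (hcyc _ _ he)⟩

end Elbow

section Segment

variable {ι : Type*} {a b c d p : ι → ℝ} {i j l : ι}

lemma segment_eq_uIcc_of_forall_ne (hab : ∀ l ≠ i, a l = b l) :
    segment ℝ a b = uIcc a b := by
  classical
  have hb : Function.update a i (b i) = b := Function.update_eq_iff.2 ⟨rfl, hab⟩
  calc segment ℝ a b
      = Function.update a i '' segment ℝ (a i) (b i) := by
        rw [Pi.image_update_segment, Function.update_eq_self, hb]
    _ = uIcc a b := by
        rw [segment_eq_uIcc, image_update_uIcc, Function.update_eq_self, hb]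

lemma mem_segment_iff_forall_mem_uIcc (hab : ∀ l ≠ i, a l = b l) :
    p ∈ segment ℝ a b ↔ ∀ l, p l ∈ uIcc (a l) (b l) := by
  rw [segment_eq_uIcc_of_forall_ne hab, ← pi_univ_uIcc, mem_univ_pi]

lemma eq_of_mem_segment (hab : ∀ l ≠ i, a l = b l) (hp : p ∈ segment ℝ a b) (hl : l ≠ i) :
    p l = b l := by
  simpa [hab l hl] using (mem_segment_iff_forall_mem_uIcc hab).1 hp l

lemma segment_inter_segment_eq_singleton (hab : ∀ l ≠ i, a l = b l) (hbc : ∀ l ≠ j, b l = c l)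
    (hij : i ≠ j) : segment ℝ a b ∩ segment ℝ b c = {b} := by
  refine Subset.antisymm (fun p hp => funext fun l => ?_)
    (singleton_subset_iff.2 ⟨right_mem_segment .., left_mem_segment ..⟩)
  obtain rfl | hl := eq_or_ne l i
  · rw [eq_of_mem_segment hbc hp.2 hij, hbc l hij]
  · exact eq_of_mem_segment hab hp.1 hl

lemma segment_inter_segment_eq_empty (hab : ∀ l ≠ i, a l = b l) (hcd : ∀ l ≠ j, c l = d l)
    (hi : l ≠ i) (hj : l ≠ j) (hne : b l ≠ d l) : segment ℝ a b ∩ segment ℝ c d = ∅ :=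
  eq_empty_of_forall_notMem fun _ hp =>
    hne ((eq_of_mem_segment hab hp.1 hi).symm.trans (eq_of_mem_segment hcd hp.2 hj))

end Segment

namespace AAString

/-- The string through the points `pts` whose `i`-th segment has direction `dir i`, where
non-consecutive segments are separated by a coordinate that is constant on both. -/
def ofDirections {k : ℕ} (pts : Fin (k + 1) → Pt3) (dir : Fin k → Fin 3) (k_pos : 1 ≤ k)
    (ne : ∀ i, pts i.castSucc (dir i) ≠ pts i.succ (dir i))
    (const : ∀ i, ∀ l ≠ dir i, pts i.castSucc l = pts i.succ l)
    (turn : ∀ i j : Fin k, (i : ℕ) + 1 = j → dir i ≠ dir j)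
    (far : ∀ i j : Fin k, (i : ℕ) + 1 < j →
      ∃ l, l ≠ dir i ∧ l ≠ dir j ∧ pts i.succ l ≠ pts j.succ l) : AAString where
  k := k
  pts := pts
  k_pos := k_pos
  consec_ne i h := ne i (congrFun h _)
  axis i := ⟨dir i, fun l hl => sub_eq_zero.2 (const i l hl).symm⟩
  simple_consec i j hij := by
    have hpts : j.castSucc = i.succ := Fin.ext hij.symm
    rw [← hpts]
    exact segment_inter_segment_eq_singleton (hpts ▸ const i) (const j) (turn i j hij)
  simple_far i j hij := by
    obtain ⟨l, hi, hj, hne⟩ := far i j hij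
    exact segment_inter_segment_eq_empty (const i) (const j) hi hj hne

lemma endpoints_subset_carrier (S : AAString) : S.endpoints ⊆ S.carrier := by
  obtain ⟨n, hn⟩ := Nat.exists_eq_add_of_le' S.k_pos
  rintro _ (rfl | rfl)
  · exact mem_iUnion.2 ⟨⟨0, by lia⟩, left_mem_segment ..⟩
  · refine mem_iUnion.2 ⟨⟨n, by lia⟩, ?_⟩
    convert right_mem_segment ℝ _ _ using 2
    exact Fin.ext hn

end AAString

/-- The data of a string in the shape of a vertical pole above `(x, y)`, from height `bot` to
height `top`, that continues at either end along an elbow in the horizontal plane: to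
`(topX, topY)` at the top, starting in the second coordinate, and to `(botX, botY)` at the bottom,
starting in the first coordinate. -/
structure DoubleElbow where
  (x y bot top topX topY botX botY : ℝ)
  bot_lt_top : bot < top
  topX_ne : topX ≠ x
  topY_ne : topY ≠ y
  botX_ne : botX ≠ x
  botY_ne : botY ≠ y

namespace DoubleElbow

variable (E : DoubleElbow) {p : Pt3}

/-- The corners of the string, from the end in the top plane to the end in the bottom plane. -/
def corner : Fin 6 → Pt3 :=
  ![![E.topX, E.topY, E.top], ![E.x, E.topY, E.top], ![E.x, E.y, E.top],
    ![E.x, E.y, E.bot], ![E.botX, E.y, E.bot], ![E.botX, E.botY, E.bot]]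

/-- The coordinate that varies along each of the five segments. -/
def dir : Fin 5 → Fin 3 := ![0, 1, 2, 0, 1]

lemma corner_castSucc_eq_succ (i : Fin 5) (l : Fin 3) (hl : l ≠ dir i) :
    E.corner i.castSucc l = E.corner i.succ l := by
  fin_cases i <;> fin_cases l <;> simp_all [corner, dir]

/-- The string described by a `DoubleElbow`. -/
def toAAString : AAString :=
  .ofDirections E.corner dir (by simp)
    (fun i => by
      have := E.bot_lt_top.ne'
      fin_cases i <;>
        simp [corner, dir, E.topX_ne, E.topY_ne, E.botX_ne.symm, E.botY_ne.symm, this])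
    E.corner_castSucc_eq_succ
    (by decide)
    (fun i j hij => by
      have := E.bot_lt_top.ne'
      fin_cases i <;> fin_cases j <;>
        simp [corner, dir, Fin.exists_fin_succ, E.topY_ne, E.botX_ne.symm, this] at hij ⊢)

lemma endpoints_toAAString : E.toAAString.endpoints =
    {![E.topX, E.topY, E.top], ![E.botX, E.botY, E.bot]} := rfl

lemma bends_toAAString : E.toAAString.bends = 4 := rfl

lemma mem_carrier_toAAString_iff_segments : p ∈ E.toAAString.carrier ↔
    (p 0 ∈ uIcc E.x E.topX ∧ p 1 = E.topY ∧ p 2 = E.top) ∨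
    (p 0 = E.x ∧ p 1 ∈ uIcc E.y E.topY ∧ p 2 = E.top) ∨
    (p 0 = E.x ∧ p 1 = E.y ∧ p 2 ∈ Icc E.bot E.top) ∨
    (p 0 ∈ uIcc E.x E.botX ∧ p 1 = E.y ∧ p 2 = E.bot) ∨
    (p 0 = E.botX ∧ p 1 ∈ uIcc E.y E.botY ∧ p 2 = E.bot) := by
  have : p ∈ E.toAAString.carrier ↔
      ∃ i : Fin 5, ∀ l, p l ∈ uIcc (E.corner i.castSucc l) (E.corner i.succ l) :=
    mem_iUnion.trans <| exists_congr fun i =>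
      mem_segment_iff_forall_mem_uIcc (E.corner_castSucc_eq_succ i)
  simp [this, corner, Fin.exists_fin_succ, Fin.forall_fin_succ,
    uIcc_comm E.topX, uIcc_comm E.topY, uIcc_of_ge E.bot_lt_top.le]

lemma mem_carrier_toAAString : p ∈ E.toAAString.carrier ↔
    (p 2 = E.top ∧ (p 0, p 1) ∈ elbow E.x E.y E.topX E.topY) ∨
    (p 0 = E.x ∧ p 1 = E.y ∧ p 2 ∈ Icc E.bot E.top) ∨
    (p 2 = E.bot ∧ (p 1, p 0) ∈ elbow E.y E.x E.botY E.botX) := by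
  rw [mem_carrier_toAAString_iff_segments]
  simp only [elbow, mem_ofPred_eq]
  tauto

end DoubleElbow

section Layout

variable {V : Type*} {G : SimpleGraph V}

lemma isStringContactRep_of_endsOn {Ψ : V → AAString} (EndsOn : V → V → Pt3 → Prop)
    (mem_endpoints : ∀ {u v p}, EndsOn u v p → p ∈ (Ψ u).endpoints)
    (mem_carrier : ∀ {u v p}, EndsOn u v p → p ∈ (Ψ v).carrier)
    (target_unique : ∀ {u v u' v' p}, EndsOn u v p → EndsOn u' v' p → v = v')
    (contact : ∀ {u v p}, u ≠ v → p ∈ (Ψ u).carrier → p ∈ (Ψ v).carrier →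
      EndsOn u v p ∨ EndsOn v u p)
    (adj : ∀ {u v}, G.Adj u v ↔ ∃ p, EndsOn u v p ∨ EndsOn v u p) :
    IsStringContactRep G Ψ := by
  refine ⟨fun u v huv p hp => ?_, fun u v w huv huw hvw p ⟨hu, hv, hw⟩ => ?_, fun u v huv => ?_⟩
  · exact (contact huv hp.1 hp.2).imp mem_endpoints mem_endpoints
  · grind [contact huv hu hv, contact huw hu hw, contact hvw hv hw]
  · refine ⟨fun ⟨p, hu, hv⟩ => adj.2 ⟨p, contact huv hu hv⟩, fun h => ?_⟩
    obtain ⟨p, h | h⟩ := adj.1 h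
    · exact ⟨p, (Ψ u).endpoints_subset_carrier (mem_endpoints h), mem_carrier h⟩
    · exact ⟨p, mem_carrier h, (Ψ v).endpoints_subset_carrier (mem_endpoints h)⟩

/-- The combinatorial data of the representation: the edges of `G` are the arcs of two functional
graphs `f` and `g`, which are drawn at the tops and at the bottoms of poles at `(X v, Y v)`, in
layers given by `h` and `k`. The roles of the two coordinates are exchanged for `g`. -/
structure Layout (G : SimpleGraph V) where
  (f g : V → Option V)
  (X Y h k : V → ℕ)
  adj_iff : ∀ {v w}, G.Adj v w ↔ (f v = some w ∨ f w = some v) ∨ (g v = some w ∨ g w = some v)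
  injective_X : X.Injective
  injective_Y : Y.Injective
  layered_f : IsLayered f X Y h
  layered_g : IsLayered g Y X k

namespace Layout

variable (L : Layout G) {u v : V} {p : Pt3}

lemma f_ne_self : L.f v ≠ some v := fun h => G.irrefl (L.adj_iff.2 (.inl (.inl h)))

lemma g_ne_self : L.g v ≠ some v := fun h => G.irrefl (L.adj_iff.2 (.inr (.inl h)))

/-- The string of `v`; the shifts by `1` put all top planes above all bottom planes. -/
def doubleElbow (v : V) : DoubleElbow where
  x := L.X v
  y := L.Y v
  bot := -(L.k v + 1)
  top := L.h v + 1
  topX := targetCoord L.f L.X v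
  topY := targetCoord L.f L.Y v
  botX := targetCoord L.g L.X v
  botY := targetCoord L.g L.Y v
  bot_lt_top := by linarith [(L.h v).cast_nonneg (α := ℝ), (L.k v).cast_nonneg (α := ℝ)]
  topX_ne := (targetCoord_eq_natCast_iff L.injective_X).not.2 L.f_ne_self
  topY_ne := (targetCoord_eq_natCast_iff L.injective_Y).not.2 L.f_ne_self
  botX_ne := (targetCoord_eq_natCast_iff L.injective_X).not.2 L.g_ne_self
  botY_ne := (targetCoord_eq_natCast_iff L.injective_Y).not.2 L.g_ne_self

/-- The strings of the representation. -/
def string (v : V) : AAString := (L.doubleElbow v).toAAString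

/-- The string of `u` ends at `p` on the pole of `v`. -/
def EndsOn (u v : V) (p : Pt3) : Prop :=
  p 0 = L.X v ∧ p 1 = L.Y v ∧
    (L.f u = some v ∧ p 2 = L.h u + 1 ∨ L.g u = some v ∧ p 2 = -(L.k u + 1))

lemma mem_carrier_string : p ∈ (L.string v).carrier ↔
    (p 2 = L.h v + 1 ∧ (p 0, p 1) ∈ arcElbow L.f L.X L.Y v) ∨
    (p 0 = L.X v ∧ p 1 = L.Y v ∧ p 2 ∈ Icc (-(L.k v + 1) : ℝ) (L.h v + 1)) ∨
    (p 2 = -(L.k v + 1) ∧ (p 1, p 0) ∈ arcElbow L.g L.Y L.X v) :=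
  DoubleElbow.mem_carrier_toAAString _

variable {L}

lemma EndsOn.mem_endpoints (h : L.EndsOn u v p) : p ∈ (L.string u).endpoints := by
  obtain ⟨hX, hY, h⟩ := h
  have eq_end {f : V → Option V} (huv : f u = some v) {z : ℝ} (hp : p 2 = z) :
      p = ![targetCoord f L.X u, targetCoord f L.Y u, z] := by
    rw [(targetCoord_eq_natCast_iff L.injective_X).2 huv,
      (targetCoord_eq_natCast_iff L.injective_Y).2 huv]
    ext l
    fin_cases l
    exacts [hX, hY, hp]
  rw [string, DoubleElbow.endpoints_toAAString]
  exact h.imp (fun ⟨huv, hp⟩ => eq_end huv hp) fun ⟨huv, hp⟩ => eq_end huv hp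

lemma EndsOn.mem_carrier (h : L.EndsOn u v p) : p ∈ (L.string v).carrier := by
  obtain ⟨hX, hY, h⟩ := h
  refine L.mem_carrier_string.2 (.inr (.inl ⟨hX, hY, ?_⟩))
  rw [mem_Icc]
  obtain ⟨huv, hp⟩ | ⟨huv, hp⟩ := h
  · have : (L.h u : ℝ) ≤ L.h v := Nat.cast_le.2 (L.layered_f.le_of_arc huv)
    constructor <;> linarith [(L.h u).cast_nonneg (α := ℝ), (L.k v).cast_nonneg (α := ℝ)]
  · have : (L.k u : ℝ) ≤ L.k v := Nat.cast_le.2 (L.layered_g.le_of_arc huv)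
    constructor <;> linarith [(L.h v).cast_nonneg (α := ℝ), (L.k u).cast_nonneg (α := ℝ)]

lemma EndsOn.target_unique {u' v' : V} (h : L.EndsOn u v p) (h' : L.EndsOn u' v' p) : v = v' :=
  L.injective_X (Nat.cast_injective (h.1.symm.trans h'.1))

lemma endsOn_of_mem_top (huv : u ≠ v) (hp : p 2 = L.h u + 1)
    (hu : (p 0, p 1) ∈ arcElbow L.f L.X L.Y u) (hv : p ∈ (L.string v).carrier) :
    L.EndsOn u v p ∨ L.EndsOn v u p := by
  obtain ⟨hpv, hv⟩ | ⟨hX, hY, -⟩ | ⟨hpv, -⟩ := L.mem_carrier_string.1 hv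
  · have heq : L.h u = L.h v := Nat.cast_injective (add_right_cancel (hp.symm.trans hpv))
    exact (L.layered_f.contact huv heq hu hv).imp
      (fun ⟨h, hq⟩ => ⟨congrArg Prod.fst hq, congrArg Prod.snd hq, .inl ⟨h, hp⟩⟩)
      fun ⟨h, hq⟩ => ⟨congrArg Prod.fst hq, congrArg Prod.snd hq, .inl ⟨h, hpv⟩⟩
  · rw [hX, hY] at hu
    exact .inl ⟨hX, hY, .inl ⟨arc_of_mem_arcElbow L.injective_X L.injective_Y huv hu, hp⟩⟩
  · linarith [(L.h u).cast_nonneg (α := ℝ), (L.k v).cast_nonneg (α := ℝ)]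

lemma endsOn_of_mem_bottom (huv : u ≠ v) (hp : p 2 = -(L.k u + 1))
    (hu : (p 1, p 0) ∈ arcElbow L.g L.Y L.X u) (hv : p ∈ (L.string v).carrier) :
    L.EndsOn u v p ∨ L.EndsOn v u p := by
  obtain ⟨hpv, -⟩ | ⟨hX, hY, -⟩ | ⟨hpv, hv⟩ := L.mem_carrier_string.1 hv
  · linarith [(L.k u).cast_nonneg (α := ℝ), (L.h v).cast_nonneg (α := ℝ)]
  · rw [hX, hY] at hu
    exact .inl ⟨hX, hY, .inr ⟨arc_of_mem_arcElbow L.injective_Y L.injective_X huv hu, hp⟩⟩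
  · have heq : L.k u = L.k v :=
      Nat.cast_injective (add_right_cancel (neg_injective (hp.symm.trans hpv)))
    exact (L.layered_g.contact huv heq hu hv).imp
      (fun ⟨h, hq⟩ => ⟨congrArg Prod.snd hq, congrArg Prod.fst hq, .inr ⟨h, hp⟩⟩)
      fun ⟨h, hq⟩ => ⟨congrArg Prod.snd hq, congrArg Prod.fst hq, .inr ⟨h, hpv⟩⟩

lemma endsOn_or_endsOn (huv : u ≠ v) (hu : p ∈ (L.string u).carrier)
    (hv : p ∈ (L.string v).carrier) : L.EndsOn u v p ∨ L.EndsOn v u p := by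
  obtain ⟨hp, hu'⟩ | ⟨hXu, -⟩ | ⟨hp, hu'⟩ := L.mem_carrier_string.1 hu
  · exact endsOn_of_mem_top huv hp hu' hv
  · obtain ⟨hp, hv'⟩ | ⟨hXv, -⟩ | ⟨hp, hv'⟩ := L.mem_carrier_string.1 hv
    · exact (endsOn_of_mem_top huv.symm hp hv' hu).symm
    · exact absurd (L.injective_X (Nat.cast_injective (hXu.symm.trans hXv))) huv
    · exact (endsOn_of_mem_bottom huv.symm hp hv' hu).symm
  · exact endsOn_of_mem_bottom huv hp hu' hv

lemma exists_endsOn_iff : (∃ p, L.EndsOn u v p) ↔ L.f u = some v ∨ L.g u = some v := by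
  constructor
  · rintro ⟨p, -, -, h⟩
    exact h.imp And.left And.left
  rintro (huv | huv)
  · exact ⟨![L.X v, L.Y v, L.h u + 1], rfl, rfl, .inl ⟨huv, rfl⟩⟩
  · exact ⟨![L.X v, L.Y v, -(L.k u + 1)], rfl, rfl, .inr ⟨huv, rfl⟩⟩

lemma adj_iff_exists_endsOn : G.Adj u v ↔ ∃ p, L.EndsOn u v p ∨ L.EndsOn v u p := by
  rw [L.adj_iff, exists_or, exists_endsOn_iff, exists_endsOn_iff, or_or_or_comm]

variable (L)

lemma isStringContactRep : IsStringContactRep G L.string :=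
  isStringContactRep_of_endsOn L.EndsOn EndsOn.mem_endpoints EndsOn.mem_carrier
    EndsOn.target_unique endsOn_or_endsOn adj_iff_exists_endsOn

end Layout

end Layout

section Orientation

lemma exists_eq_some_iff {α : Type*} {P : α → Prop} (hP : ∀ a b, P a → P b → a = b) :
    ∃ o : Option α, ∀ a, o = some a ↔ P a := by
  by_cases h : ∃ a, P a
  · obtain ⟨a, ha⟩ := h
    exact ⟨some a, fun b => ⟨fun hab => Option.some_injective _ hab ▸ ha,
      fun hb => congrArg some (hP a b ha hb)⟩⟩
  · exact ⟨none, fun a => ⟨nofun, fun ha => (h ⟨a, ha⟩).elim⟩⟩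

variable {V ι : Type*} [Fintype ι] {G : SimpleGraph V} [G.LocallyFinite]

lemma two_mul_card_le_mul_card_ends [DecidableEq V] {d : ℕ} (hdeg : ∀ v, G.degree v ≤ d)
    (s : Finset G.edgeSet) :
    2 * s.card ≤ d * (s.biUnion fun e => e.1.toFinset).card := by
  rw [mul_comm, mul_comm d]
  refine Finset.card_mul_le_card_mul (fun e v => v ∈ e.1) (fun e he => ?_)
    fun v _ => le_trans ?_ (hdeg v)
  · rw [← Sym2.card_toFinset_of_not_isDiag _ (G.not_isDiag_of_mem_edgeSet e.2)]
    exact Finset.card_le_card fun v hv => Finset.mem_filter.2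
      ⟨Finset.mem_biUnion.2 ⟨e, he, hv⟩, Sym2.mem_toFinset.1 hv⟩
  · rw [← G.card_incidenceFinset_eq_degree v]
    refine Finset.card_le_card_of_injOn _ (fun e he => ?_) Subtype.val_injective.injOn
    exact (G.mem_incidenceFinset ..).2 ⟨e.2, (Finset.mem_filter.1 he).2⟩

lemma exists_injective_end_slot (hdeg : ∀ v, G.degree v ≤ 2 * Fintype.card ι) :
    ∃ φ : G.edgeSet → V × ι, φ.Injective ∧ ∀ e, (φ e).1 ∈ e.1 := by
  classical
  let t (e : G.edgeSet) : Finset (V × ι) := e.1.toFinset ×ˢ Finset.univ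
  have hall (s : Finset G.edgeSet) : s.card ≤ (s.biUnion t).card := by
    have : s.biUnion t = (s.biUnion fun e => e.1.toFinset) ×ˢ Finset.univ := by
      ext; simp [t]
    rw [this, Finset.card_product, Finset.card_univ]
    linarith [two_mul_card_le_mul_card_ends hdeg s]
  obtain ⟨φ, hφ, hmem⟩ := (Finset.all_card_le_biUnion_card_iff_exists_injective t).1 hall
  exact ⟨φ, hφ, fun e => by simpa [t] using hmem e⟩

lemma exists_orientation (hdeg : ∀ v, G.degree v ≤ 2 * Fintype.card ι) :
    ∃ o : V → ι → Option V, ∀ v w, G.Adj v w ↔ ∃ i, o v i = some w ∨ o w i = some v := by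
  obtain ⟨φ, hφ, hmem⟩ := exists_injective_end_slot hdeg
  choose o ho using fun (v : V) (i : ι) =>
    exists_eq_some_iff (P := fun w => ∃ e, φ e = (v, i) ∧ e.1 = s(v, w)) <| by
      rintro a b ⟨e, he, ha⟩ ⟨e', he', hb⟩
      obtain rfl := hφ (he.trans he'.symm)
      exact Sym2.congr_right.1 (ha.symm.trans hb)
  refine ⟨o, fun v w => ⟨fun hvw => ?_, ?_⟩⟩
  · let e : G.edgeSet := ⟨s(v, w), hvw⟩
    refine ⟨(φ e).2, (Sym2.mem_iff.1 (hmem e)).imp (fun h => ?_) fun h => ?_⟩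
    · exact (ho ..).2 ⟨e, Prod.ext h rfl, rfl⟩
    · exact (ho ..).2 ⟨e, Prod.ext h rfl, Sym2.eq_swap⟩
  · rintro ⟨i, h | h⟩
    · obtain ⟨e, -, he⟩ := (ho ..).1 h
      exact G.mem_edgeSet.1 (he ▸ e.2)
    · obtain ⟨e, -, he⟩ := (ho ..).1 h
      exact (G.mem_edgeSet.1 (he ▸ e.2)).symm

end Orientation

section Existence

variable {V : Type*} [Finite V]

lemma exists_reaches_forall_le (g : V → Option V) (X : V → ℕ) (v : V) :
    ∃ c, (∀ w, Reaches g c w → X c ≤ X w) ∧ Reaches g v c := by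
  obtain ⟨c, hvc, hc⟩ := (toFinite {w | Reaches g v w}).exists_minimalFor X _ ⟨v, .refl⟩
  exact ⟨c, fun w hcw => (le_total (X c) (X w)).elim id (hc (hvc.trans hcw)), hvc⟩

lemma exists_cutsCycles (g : V → Option V) {X : V → ℕ} (hX : X.Injective) :
    ∃ (C : Set V) (Y : V → ℕ), Y.Injective ∧ CutsCycles g C Y X ∧
      ∀ u v, (∀ w, Reaches g u w → X u ≤ X w) → X u < X v → Y u < Y v := by
  let C : Set V := {c | ∀ w, Reaches g c w → X c ≤ X w}
  obtain ⟨Y, hY, hYX, hYC, hYg⟩ :=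
    exists_injective_nat_increasing_toward (exists_reaches_forall_le g X) X
  refine ⟨C, Y, hY, ⟨fun {v w} hvw hw => ?_, fun {c v} hc hcv hne => ?_⟩, fun u v hu huv => ?_⟩
  · by_cases hv : v ∈ C
    · exact hYC v hv w hw
    · obtain ⟨w', hw', hlt⟩ := hYg v hv
      obtain rfl : w' = w := Option.some_injective _ (hw'.symm.trans hvw)
      exact hlt hw
  · exact (hc v hcv).lt_of_ne (hX.ne hne.symm)
  · by_cases hv : v ∈ C
    · exact hYX u hu v hv huv
    · exact hYC u hu v hv

/-- The set `R` contains one vertex from each terminal strongly connected component of `o`; every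
other vertex contributes to `f` the first arc of a path that leads to `R`. -/
lemma exists_split_increasing (o : V → Bool → Option V) :
    ∃ (f g : V → Option V) (R : Set V) (X : V → ℕ), X.Injective ∧
      (∀ v w, (∃ b, o v b = some w) ↔ f v = some w ∨ g v = some w) ∧
      (∀ v w, f v = some w → w ∉ R → X v < X w) ∧
      ∀ r ∈ R, ∀ v, ReflTransGen (fun v w => ∃ b, o v b = some w) r v → v ≠ r → X r < X v := by
  obtain ⟨R, hcof, hanti⟩ :=
    @exists_isCofinal_isAntichain V _ (reachabilityPreorder fun v w => ∃ b, o v b = some w)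
  obtain ⟨X, hX, -, hXR, hXo⟩ := exists_injective_nat_increasing_toward hcof 0
  have hb (v : V) : ∃ b, ∀ w, o v b = some w → w ∉ R → X v < X w := by
    by_cases hv : v ∈ R
    · exact ⟨true, fun w _ => hXR v hv w⟩
    · obtain ⟨w, ⟨b, hb⟩, hw⟩ := hXo v hv
      exact ⟨b, fun w' hw' => Option.some_injective _ (hb.symm.trans hw') ▸ hw⟩
  choose b hb using hb
  refine ⟨fun v => o v (b v), fun v => o v (!b v), R, X, hX, fun v w => ?_, hb,
    fun r hr v hrv hne => hXR r hr v fun hv => hanti hr hv hne.symm hrv⟩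
  cases h : b v <;> simp [h, or_comm]

lemma nonempty_layout {G : SimpleGraph V} {o : V → Bool → Option V}
    (ho : ∀ v w, G.Adj v w ↔ ∃ b, o v b = some w ∨ o w b = some v) : Nonempty (Layout G) := by
  obtain ⟨f, g, R, X, hX, hfg, hf, hR⟩ := exists_split_increasing o
  have hRg (r : V) (hr : r ∈ R) (v : V) (hrv : Reaches g r v) : X r ≤ X v := by
    obtain rfl | hne := eq_or_ne v r
    exacts [le_rfl, (hR r hr v (.mono (fun _ _ h => (hfg ..).2 (.inr h)) _ _ hrv) hne).le]
  obtain ⟨C, Y, hY, hg, hXY⟩ := exists_cutsCycles g hX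
  have hf : CutsCycles f R X Y := by
    refine ⟨hf _ _, fun {r v} hr hrv hne => hXY r v (hRg r hr) (hR r hr v ?_ hne)⟩
    exact .mono (fun _ _ h => (hfg ..).2 (.inl h)) _ _ hrv
  obtain ⟨h, hh⟩ := hf.exists_isLayered hX hY
  obtain ⟨k, hk⟩ := hg.exists_isLayered hY hX
  refine ⟨⟨f, g, X, Y, h, k, fun {v w} => ?_, hX, hY, hh, hk⟩⟩
  rw [ho, exists_or, hfg, hfg, or_or_or_comm]

end Existence

/-- Every finite simple graph with maximum degree at most 4 admits a string contact
representation in ℝ³ of complexity at most 4 (every string is a `B₄`-string). -/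
theorem maxDegFour_stringContactRep {V : Type*} [Fintype V] [DecidableEq V]
    (G : SimpleGraph V) [DecidableRel G.Adj]
    (hdeg : ∀ v : V, G.degree v ≤ 4) :
    ∃ Ψ : V → AAString, IsStringContactRep G Ψ ∧ ∀ v : V, (Ψ v).bends ≤ 4 := by
  obtain ⟨o, ho⟩ := exists_orientation (ι := Bool) hdeg
  obtain ⟨L⟩ := nonempty_layout ho
  exact ⟨L.string, L.isStringContactRep, fun v => (L.doubleElbow v).bends_toAAString.le⟩
end

section
/- Every finite triangle-free Hamiltonian simple graph with maximum degree at most 4 admits a string contact representation in ℝ³ in which every string is a B₄-string and all strings except at most one are B₃-strings. -/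
open Set

/-!
Draw the Hamilton cycle in a horizontal plane as a staircase of segments, each finishing on the
next one; closing it up costs at most one bend, at a single vertex, and only for odd cycles. The
other edges form a graph of maximum degree two, whose components are paths and cycles. Orient these
coherently. Below the plane the string of `u` runs down a vertical leg from the start of its segment
to a level of its own, and if `u → v` it goes on at that level, with one turn, to the leg of `v`.
This requires `v` to have the lower level, which is impossible all around a directed cycle. So an
exception is made for the arc `u → v` into the vertex `v` of largest abscissa in a component: the
orientation can be chosen such that the string of `v`, on its way to the leg of its successor,
crosses the vertical plane containing the leg of `u`, in which the string of `u` then rises to it.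
Below the plane at most three segments are needed, so that strings with a straight segment above
have at most three bends.
-/

/-! ### Axis-aligned segments and strings -/

theorem segment_eq_uIcc_of_axisParallel {p q : Pt3} (h : AxisParallel (q - p)) :
    segment ℝ p q = uIcc p q := by
  obtain ⟨i, hi⟩ := h
  have hp : Function.update p i (p i) = p := Function.update_eq_self i p
  have hq : Function.update p i (q i) = q :=
    Function.update_eq_iff.2 ⟨rfl, fun j hj => (sub_eq_zero.1 (hi j hj)).symm⟩
  rw [← hp, ← hq, ← Pi.image_update_segment, segment_eq_uIcc, image_update_uIcc]

theorem mem_uIcc_pt3 {q p r : Pt3} :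
    q ∈ uIcc p r ↔ q 0 ∈ uIcc (p 0) (r 0) ∧ q 1 ∈ uIcc (p 1) (r 1) ∧ q 2 ∈ uIcc (p 2) (r 2) := by
  rw [← pi_univ_uIcc, mem_univ_pi]
  exact ⟨fun h => ⟨h 0, h 1, h 2⟩, fun ⟨h0, h1, h2⟩ i => by fin_cases i <;> assumption⟩

namespace AAString

/-- The string consisting of a single segment. -/
def single (p q : Pt3) (hne : p ≠ q) (hax : AxisParallel (q - p)) : AAString where
  k := 1
  pts := ![p, q]
  k_pos := le_rfl
  consec_ne i := by fin_cases i; simpa using hne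
  axis i := by fin_cases i; simpa using hax
  simple_consec i j h := by omega
  simple_far i j h := by omega

variable (S : AAString)

theorem segment_subset_carrier (i : Fin S.k) :
    segment ℝ (S.pts i.castSucc) (S.pts i.succ) ⊆ S.carrier :=
  subset_iUnion (fun i : Fin S.k => segment ℝ (S.pts i.castSucc) (S.pts i.succ)) i

theorem pts_zero_mem_segment_iff (j : Fin S.k) :
    S.pts 0 ∈ segment ℝ (S.pts j.castSucc) (S.pts j.succ) ↔ (j : ℕ) = 0 := by
  let o : Fin S.k := ⟨0, S.k_pos⟩
  have ho : S.pts 0 ∈ segment ℝ (S.pts o.castSucc) (S.pts o.succ) := left_mem_segment _ _ _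
  refine ⟨fun hj => ?_, fun hj => ?_⟩
  · by_contra hj0
    rcases (Nat.one_le_iff_ne_zero.2 hj0).eq_or_lt with hj1 | hj1
    · have : S.pts 0 ∈ ({S.pts o.succ} : Set Pt3) := S.simple_consec o j hj1 ▸ ⟨ho, hj⟩
      exact S.consec_ne o this
    · exact (S.simple_far o j hj1).subset ⟨ho, hj⟩
  · obtain rfl : j = o := Fin.ext hj
    exact ho

/-- Prolong a string by the segment from `p` to its first endpoint. -/
def cons (p : Pt3) (hne : p ≠ S.pts 0) (hax : AxisParallel (S.pts 0 - p))
    (hmeet : segment ℝ p (S.pts 0) ∩ S.carrier ⊆ {S.pts 0}) : AAString where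
  k := S.k + 1
  pts := Fin.cons p S.pts
  k_pos := Nat.le_add_left 1 S.k
  consec_ne i := by
    cases i using Fin.cases with
    | zero => simpa using hne
    | succ i => simpa [← Fin.succ_castSucc] using S.consec_ne i
  axis i := by
    cases i using Fin.cases with
    | zero => simpa using hax
    | succ i => simpa [← Fin.succ_castSucc] using S.axis i
  simple_consec i j hij := by
    cases j using Fin.cases with
    | zero => simp at hij
    | succ j =>
      simp only [Fin.val_succ, Nat.add_right_cancel_iff] at hij
      cases i using Fin.cases with
      | zero =>
        have hj : S.pts 0 ∈ segment ℝ (S.pts j.castSucc) (S.pts j.succ) :=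
          (S.pts_zero_mem_segment_iff j).2 (by simpa using hij.symm)
        simp only [← Fin.succ_castSucc, Fin.cons_succ, Fin.castSucc_zero, Fin.cons_zero]
        exact Subset.antisymm
          ((inter_subset_inter_right _ (S.segment_subset_carrier j)).trans hmeet)
          (singleton_subset_iff.2 ⟨right_mem_segment _ _ _, hj⟩)
      | succ i => simpa [← Fin.succ_castSucc] using S.simple_consec i j hij
  simple_far i j hij := by
    cases j using Fin.cases with
    | zero => simp at hij
    | succ j =>
      simp only [Fin.val_succ, Nat.add_lt_add_iff_right] at hij
      cases i using Fin.cases with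
      | zero =>
        simp only [← Fin.succ_castSucc, Fin.cons_succ, Fin.castSucc_zero, Fin.cons_zero]
        refine eq_empty_of_forall_notMem fun q hq => ?_
        obtain rfl : q = S.pts 0 := hmeet ⟨hq.1, S.segment_subset_carrier j hq.2⟩
        exact hij.ne' ((S.pts_zero_mem_segment_iff j).1 hq.2)
      | succ i => simpa [← Fin.succ_castSucc] using S.simple_far i j hij

end AAString

/-- The set `C` is traced by a string with `k` segments running from `s` to `e`. -/
def IsTraced (k : ℕ) (s e : Pt3) (C : Set Pt3) : Prop :=
  ∃ S : AAString, S.k = k ∧ S.pts 0 = s ∧ S.pts (Fin.last S.k) = e ∧ S.carrier = C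

namespace IsTraced

theorem single {p q : Pt3} (hne : p ≠ q) (hax : AxisParallel (q - p)) :
    IsTraced 1 p q (uIcc p q) := by
  refine ⟨.single p q hne hax, rfl, rfl, rfl, ?_⟩
  rw [← segment_eq_uIcc_of_axisParallel hax]
  exact ciSup_unique (ι := Fin 1)

theorem cons {k : ℕ} {p s e : Pt3} {C : Set Pt3} (hC : IsTraced k s e C) (hne : p ≠ s)
    (hax : AxisParallel (s - p)) (hmeet : uIcc p s ∩ C ⊆ {s}) :
    IsTraced (k + 1) p e (uIcc p s ∪ C) := by
  obtain ⟨S, rfl, rfl, rfl, rfl⟩ := hC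
  rw [← segment_eq_uIcc_of_axisParallel hax] at hmeet ⊢
  refine ⟨S.cons p hne hax hmeet, rfl, rfl, rfl, ?_⟩
  ext q
  simp [AAString.carrier, AAString.cons, Fin.exists_fin_succ]

end IsTraced

/-! ### Orientations and levels -/

/-- An orientation `D` of the edges of `H` in which every vertex has at most one out-neighbour and
at most one in-neighbour, so that each component is a directed path or a directed cycle. -/
structure IsCoherentOrientation {V : Type*} (H : SimpleGraph V) (D : V → V → Prop) : Prop where
  adj_iff : ∀ u v, H.Adj u v ↔ D u v ∨ D v u
  asymm : ∀ {u v}, D u v → ¬ D v u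
  right_unique : ∀ {u v w}, D u v → D u w → v = w
  left_unique : ∀ {u v w}, D u w → D v w → u = v

/-- The relation `D` with all arcs that start in `S` reversed, for `S` a union of components. -/
def flipOn {V : Type*} (D : V → V → Prop) (S : Set V) (u v : V) : Prop :=
  u ∉ S ∧ D u v ∨ u ∈ S ∧ D v u

namespace IsCoherentOrientation

variable {V : Type*} {H : SimpleGraph V} {D : V → V → Prop} {u v : V}

theorem adj (hD : IsCoherentOrientation H D) (h : D u v) : H.Adj u v := (hD.adj_iff u v).2 (.inl h)

theorem ne (hD : IsCoherentOrientation H D) (h : D u v) : u ≠ v := (hD.adj h).ne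

theorem swap (hD : IsCoherentOrientation H D) : IsCoherentOrientation H (Function.swap D) where
  adj_iff u v := (hD.adj_iff u v).trans or_comm
  asymm := hD.asymm
  right_unique := hD.left_unique
  left_unique := hD.right_unique

theorem flipOn_of_closed (hD : IsCoherentOrientation H D) {S : Set V}
    (hS : ∀ u v, D u v → (u ∈ S ↔ v ∈ S)) : IsCoherentOrientation H (flipOn D S) where
  adj_iff u v := by
    have := hD.adj_iff u v
    grind [flipOn]
  asymm := by
    have := @hD.asymm
    grind [flipOn]
  right_unique := by
    have := @hD.right_unique
    have := @hD.left_unique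
    grind [flipOn]
  left_unique := by
    have := @hD.right_unique
    have := @hD.left_unique
    grind [flipOn]

theorem of_deleteEdges (hD : IsCoherentOrientation (H.deleteEdges {s(u, v)}) D) (huv : H.Adj u v)
    (hu : ∀ w, ¬ D u w) (hv : ∀ w, ¬ D w v) :
    IsCoherentOrientation H (fun x y => D x y ∨ x = u ∧ y = v) := by
  have hvu : ¬ D v u := fun h => by simpa using hD.adj h
  have := huv.ne
  refine ⟨fun x y => ?_, ?_, ?_, ?_⟩
  · have := hD.adj_iff x y
    simp only [SimpleGraph.deleteEdges_adj, mem_singleton_iff, Sym2.eq_iff] at this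
    have := huv.symm
    grind
  · have := @hD.asymm
    grind
  · have := @hD.right_unique
    grind
  · have := @hD.left_unique
    grind

theorem exists_source_of_sinks (hD : IsCoherentOrientation H D) (huv : u ≠ v)
    (hu : ∀ w, ¬ D u w) (hv : ∀ w, ¬ D v w) :
    ∃ D', IsCoherentOrientation H D' ∧ (∀ w, ¬ D' u w) ∧ ∀ w, ¬ D' w v := by
  let S : Set V := {w | Relation.ReflTransGen D w v}
  have hS : ∀ x y, D x y → (x ∈ S ↔ y ∈ S) := fun x y hxy => by
    refine ⟨fun hx => ?_, fun hy => .head hxy hy⟩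
    rcases hx.cases_head with rfl | ⟨z, hxz, hz⟩
    · exact (hv y hxy).elim
    · rwa [hD.right_unique hxy hxz]
  have huS : u ∉ S := fun h => by
    rcases h.cases_head with rfl | ⟨z, huz, -⟩
    exacts [huv rfl, hu z huz]
  have hvS : v ∈ S := .refl
  refine ⟨flipOn D S, hD.flipOn_of_closed hS, ?_, ?_⟩
  · rintro w (⟨-, h⟩ | ⟨h, -⟩)
    exacts [hu w h, huS h]
  · rintro w (⟨hw, h⟩ | ⟨-, h⟩)
    exacts [hw ((hS w v h).2 hvS), hv w h]

theorem exists_sink_source (hD : IsCoherentOrientation H D) (huv : u ≠ v)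
    (hu : (∀ w, ¬ D u w) ∨ ∀ w, ¬ D w u) (hv : (∀ w, ¬ D v w) ∨ ∀ w, ¬ D w v) :
    ∃ D', IsCoherentOrientation H D' ∧ (∀ w, ¬ D' u w) ∧ ∀ w, ¬ D' w v := by
  rcases hu with hu | hu <;> rcases hv with hv | hv
  · exact hD.exists_source_of_sinks huv hu hv
  · exact ⟨D, hD, hu, hv⟩
  · exact ⟨_, hD.swap, hu, hv⟩
  · exact hD.swap.exists_source_of_sinks huv hu hv

theorem sink_or_source_of_deleteEdges [Finite V]
    (hD : IsCoherentOrientation (H.deleteEdges {s(u, v)}) D) (huv : H.Adj u v)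
    (hdeg : (H.neighborSet u).ncard ≤ 2) : (∀ w, ¬ D u w) ∨ ∀ w, ¬ D w u := by
  by_contra! h
  obtain ⟨⟨w, huw⟩, ⟨x, hxu⟩⟩ := h
  have hw := (SimpleGraph.deleteEdges_adj.1 (hD.adj huw))
  have hx := (SimpleGraph.deleteEdges_adj.1 (hD.adj hxu).symm)
  refine hdeg.not_gt ((two_lt_ncard_iff (toFinite _)).2
    ⟨v, w, x, huv, hw.1, hx.1, ?_, ?_, ?_⟩)
  · rintro rfl
    exact hw.2 rfl
  · rintro rfl
    exact hx.2 rfl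
  · rintro rfl
    exact hD.asymm huw hxu

end IsCoherentOrientation

theorem exists_isCoherentOrientation {V : Type*} [Finite V] (H : SimpleGraph V)
    (hdeg : ∀ u, (H.neighborSet u).ncard ≤ 2) : ∃ D, IsCoherentOrientation H D := by
  induction H using WellFoundedLT.induction with
  | ind H ih =>
    rcases eq_or_ne H ⊥ with rfl | hH
    · exact ⟨fun _ _ => False, by simp, by simp, by simp, by simp⟩
    obtain ⟨u, v, huv⟩ := SimpleGraph.ne_bot_iff_exists_adj.1 hH
    have hle : H.deleteEdges {s(u, v)} ≤ H := H.deleteEdges_le _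
    have hlt : H.deleteEdges {s(u, v)} < H :=
      hle.lt_of_ne fun h => by simpa using h.ge huv
    obtain ⟨D, hD⟩ := ih _ hlt fun w =>
      (ncard_le_ncard (fun x hx => hle hx) (toFinite _)).trans (hdeg w)
    obtain ⟨D', hD', hu, hv⟩ := hD.exists_sink_source huv.ne
      (hD.sink_or_source_of_deleteEdges huv (hdeg u))
      ((Sym2.eq_swap ▸ hD).sink_or_source_of_deleteEdges huv.symm (hdeg v))
    exact ⟨_, hD'.of_deleteEdges huv hu hv⟩

/-- The vertex `v` maximises `X` on its connected component. -/
def IsPeak {V : Type*} (H : SimpleGraph V) (X : V → ℝ) (v : V) : Prop :=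
  ∀ w, H.Reachable v w → X w ≤ X v

section Levels

variable {V : Type*} {H : SimpleGraph V} {X : V → ℝ}

theorem IsPeak.eq_of_reachable (hX : Function.Injective X) {u v : V} (hu : IsPeak H X u)
    (hv : IsPeak H X v) (huv : H.Reachable u v) : u = v :=
  hX ((hv u huv.symm).antisymm (hu v huv))

theorem exists_reachable_isPeak [Finite V] (u : V) : ∃ m, H.Reachable u m ∧ IsPeak H X m := by
  obtain ⟨m, hum, hm⟩ := exists_max_image {w | H.Reachable u w} X (toFinite _) ⟨u, .refl u⟩
  exact ⟨m, hum, fun w hw => hm w (hum.trans hw)⟩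

theorem IsCoherentOrientation.exists_lt_of_isPeak {D : V → V → Prop}
    (hD : IsCoherentOrientation H D) (hX : Function.Injective X) :
    ∃ D', IsCoherentOrientation H D' ∧
      ∀ u v c, D' u v → D' v c → IsPeak H X v → X c < X u := by
  let S : Set V :=
    {x | ∃ u v c, H.Reachable x v ∧ D u v ∧ D v c ∧ IsPeak H X v ∧ X u < X c}
  have hS : ∀ x y, D x y → (x ∈ S ↔ y ∈ S) := fun x y hxy => by
    have hr := (hD.adj hxy).reachable
    constructor <;> rintro ⟨u, v, c, hv, h⟩
    exacts [⟨u, v, c, hr.symm.trans hv, h⟩, ⟨u, v, c, hr.trans hv, h⟩]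
  refine ⟨flipOn D S, hD.flipOn_of_closed hS, ?_⟩
  rintro u v c (⟨huS, huv⟩ | ⟨huS, hvu⟩) (⟨hvS, hvc⟩ | ⟨hvS, hcv⟩) hpeak
  · have hne : X c ≠ X u := fun h => hD.asymm huv (hX h ▸ hvc)
    exact hne.lt_or_gt.resolve_right fun h => hvS ⟨u, v, c, .refl v, huv, hvc, hpeak, h⟩
  · exact (huS ((hS u v huv).2 hvS)).elim
  · exact (hvS ((hS v u hvu).2 huS)).elim
  · obtain ⟨u', v', c', hvv', huv', hvc', hpeak', hlt⟩ := hvS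
    obtain rfl := hpeak.eq_of_reachable hX hpeak' hvv'
    rwa [hD.left_unique hcv huv', hD.right_unique hvu hvc']

/-- The arcs of `D`, except those entering the peak of a component from which an arc leaves. Levels
are going to decrease along these arcs. -/
def OffPeakArc (H : SimpleGraph V) (X : V → ℝ) (D : V → V → Prop) (u v : V) : Prop :=
  D u v ∧ ¬ (IsPeak H X v ∧ ∃ c, D v c)

theorem IsCoherentOrientation.not_transGen_offPeakArc [Finite V] {D : V → V → Prop}
    (hD : IsCoherentOrientation H D) (u : V) : ¬ Relation.TransGen (OffPeakArc H X D) u u := by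
  intro huu
  have hstep : ∀ w x, H.Adj w x →
      Relation.TransGen (OffPeakArc H X D) u w ∧ Relation.TransGen (OffPeakArc H X D) w u →
      Relation.TransGen (OffPeakArc H X D) u x ∧ Relation.TransGen (OffPeakArc H X D) x u := by
    rintro w x hwx ⟨huw, hwu⟩
    rcases (hD.adj_iff w x).1 hwx with h | h
    · obtain ⟨y, hwy, hyu⟩ := Relation.TransGen.head'_iff.1 hwu
      obtain rfl := hD.right_unique h hwy.1
      exact ⟨huw.tail hwy, .trans_right hyu huu⟩
    · obtain ⟨y, huy, hyw⟩ := Relation.TransGen.tail'_iff.1 huw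
      obtain rfl := hD.left_unique h hyw.1
      exact ⟨.trans_left huu huy, hwu.head hyw⟩
  obtain ⟨m, hum, hm⟩ := exists_reachable_isPeak (H := H) (X := X) u
  have hcycle : Relation.TransGen (OffPeakArc H X D) u m ∧
      Relation.TransGen (OffPeakArc H X D) m u := by
    rw [SimpleGraph.reachable_iff_reflTransGen] at hum
    clear hm
    induction hum with
    | refl => exact ⟨huu, huu⟩
    | tail _ hadj ih => exact hstep _ _ hadj ih
  obtain ⟨x, -, hxm⟩ := Relation.TransGen.tail'_iff.1 hcycle.1
  obtain ⟨y, hmy, -⟩ := Relation.TransGen.head'_iff.1 hcycle.2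
  exact hxm.2 ⟨hm, y, hmy.1⟩

theorem exists_injective_lt_of_acyclic {V : Type*} [Countable V] {R : V → V → Prop}
    (hR : ∀ u, ¬ Relation.TransGen R u u) :
    ∃ b : V → ℝ, Function.Injective b ∧ ∀ u v, R u v → b v < b u := by
  let _ : PartialOrder V :=
    { le := fun u v => Relation.ReflTransGen R v u
      le_refl := fun _ => .refl
      le_trans := fun _ _ _ huv hvw => hvw.trans huv
      le_antisymm := fun u v huv hvu => by
        rcases Relation.reflTransGen_iff_eq_or_transGen.1 huv with h | h
        exacts [h, (hR v (h.trans_left hvu)).elim] }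
  have : Countable (LinearExtension V) := ‹Countable V›
  obtain ⟨f⟩ := Order.embedding_from_countable_to_dense (LinearExtension V) ℝ
  refine ⟨fun v => f (toLinearExtension v), fun u v h => f.injective h, fun u v huv => ?_⟩
  refine (f.monotone (toLinearExtension.monotone (.single huv))).lt_of_ne fun h => ?_
  obtain rfl : v = u := f.injective h
  exact hR _ (.single huv)

/-- An orientation together with levels `b`, such that every arc `u → v` either descends, or
the level of `v` exceeds that of `u` and the arc `v → c` leaving `v` descends and passes over `u`,
in the sense that `X c < X u < X v`. -/
structure IsLevelledOrientation (H : SimpleGraph V) (X b : V → ℝ) (D : V → V → Prop) : Prop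
    extends IsCoherentOrientation H D where
  level_injective : Function.Injective b
  descends_or_passesOver : ∀ {u v}, D u v →
    b v < b u ∨ b u < b v ∧ ∃ c, D v c ∧ b c < b v ∧ X c < X u ∧ X u < X v

theorem IsLevelledOrientation.passesOver {b : V → ℝ} {D : V → V → Prop}
    (hD : IsLevelledOrientation H X b D) {u v c : V} (huv : D u v) (hlt : b u < b v)
    (hvc : D v c) : b c < b v ∧ X c < X u ∧ X u < X v := by
  obtain ⟨-, c', hvc', h⟩ := (hD.descends_or_passesOver huv).resolve_left hlt.not_gt
  rwa [hD.right_unique hvc hvc']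

theorem exists_isLevelledOrientation [Finite V] (hX : Function.Injective X)
    (hdeg : ∀ u, (H.neighborSet u).ncard ≤ 2) : ∃ b D, IsLevelledOrientation H X b D := by
  obtain ⟨D₀, hD₀⟩ := exists_isCoherentOrientation H hdeg
  obtain ⟨D, hD, hpeak⟩ := hD₀.exists_lt_of_isPeak hX
  obtain ⟨b, hb, hlt⟩ := exists_injective_lt_of_acyclic (hD.not_transGen_offPeakArc (X := X))
  refine ⟨b, D, hD, hb, fun {u v} huv => ?_⟩
  by_cases h : IsPeak H X v ∧ ∃ c, D v c
  · obtain ⟨hv, c, hvc⟩ := h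
    have hc : ¬ IsPeak H X c := fun hc =>
      hD.ne hvc (hv.eq_of_reachable hX hc (hD.adj hvc).reachable)
    have huv' : X u < X v :=
      (hv u (hD.adj huv).symm.reachable).lt_of_ne (hX.ne (hD.ne huv))
    exact (hb.ne (hD.ne huv)).lt_or_gt.symm.imp_right fun h =>
      ⟨h, c, hvc, hlt v c ⟨hvc, fun hc' => hc hc'.1⟩, hpeak u v c huv hvc hv, huv'⟩
  · exact .inl (hlt u v ⟨huv, h⟩)

end Levels

/-! ### Plane drawings of cycles -/

/-- The path that runs straight from `p` to `q` and then straight from `q` to `r`. -/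
def bentPath {α : Type*} [Lattice α] (p q r : α) : Set α := uIcc p q ∪ uIcc q r

/-- A drawing in the plane over `α` of the cyclic graph whose arcs are `u → next u`: each vertex is
a path with at most one bend, and contacts between paths happen only where the path of `u` finishes
on the path of `next u`. The paths start at pairwise distinct abscissas and ordinates. -/
structure CycleDrawing {V : Type*} (next : V → V) (α : Type*) [LinearOrder α] where
  start : V → α × α
  corner : V → α × α
  finish : V → α × α
  start_fst_injective : Function.Injective fun u => (start u).1
  start_snd_injective : Function.Injective fun u => (start u).2
  start_ne_corner : ∀ u, start u ≠ corner u
  start_corner_axis : ∀ u, (start u).1 = (corner u).1 ∨ (start u).2 = (corner u).2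
  corner_finish_axis : ∀ u, (corner u).1 = (finish u).1 ∨ (corner u).2 = (finish u).2
  simple : ∀ u, uIcc (corner u) (start u) ∩ uIcc (finish u) (corner u) ⊆ {corner u}
  finish_injective : Function.Injective finish
  finish_mem_next : ∀ u, finish u ∈ bentPath (start (next u)) (corner (next u)) (finish (next u))
  eq_finish_of_mem : ∀ {u v p}, u ≠ v → p ∈ bentPath (start u) (corner u) (finish u) →
    p ∈ bentPath (start v) (corner v) (finish v) →
    (v = next u ∧ p = finish u) ∨ (u = next v ∧ p = finish v)

section Rounding

variable {α β : Type*} [LinearOrder α] [LinearOrder β] {f : α → β}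

theorem mapsTo_prodMap_uIcc (hf : Monotone f) (p q : α × α) :
    MapsTo (Prod.map f f) (uIcc p q) (uIcc (Prod.map f f p) (Prod.map f f q)) := by
  simp only [uIcc_prod_eq]
  exact fun x hx => ⟨hf.mapsTo_uIcc hx.1, hf.mapsTo_uIcc hx.2⟩

theorem mapsTo_prodMap_bentPath (hf : Monotone f) (p q r : α × α) :
    MapsTo (Prod.map f f) (bentPath p q r)
      (bentPath (Prod.map f f p) (Prod.map f f q) (Prod.map f f r)) :=
  (mapsTo_prodMap_uIcc hf p q).union_union (mapsTo_prodMap_uIcc hf q r)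

/-- The inclusion of the integer lattice in the plane. -/
def latticePoint (z : ℤ × ℤ) : ℝ × ℝ := Prod.map (↑) (↑) z

theorem latticePoint_injective : Function.Injective latticePoint :=
  Int.cast_injective.prodMap Int.cast_injective

theorem prodMap_latticePoint {f : ℝ → ℤ} (hf : ∀ z : ℤ, f z = z) (p : ℤ × ℤ) :
    Prod.map f f (latticePoint p) = p :=
  Prod.ext (hf p.1) (hf p.2)

theorem eq_latticePoint {p : ℝ × ℝ} {z : ℤ × ℤ} (hfloor : Prod.map Int.floor Int.floor p = z)
    (hceil : Prod.map Int.ceil Int.ceil p = z) : p = latticePoint z := by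
  subst hfloor
  rw [Prod.ext_iff] at hceil
  exact Prod.ext ((Int.ceil_eq_iff.1 hceil.1).2.antisymm (Int.floor_le p.1))
    ((Int.ceil_eq_iff.1 hceil.2).2.antisymm (Int.floor_le p.2))

end Rounding

/-- An integral drawing of a cycle of length at least three, regarded as a real one. Every point
of a real path has both its coordinatewise floor and its ceiling on the integral path, so contacts
can only occur at lattice points. -/
def CycleDrawing.toReal {V : Type*} {next : V → V} (d : CycleDrawing next ℤ)
    (hnext : ∀ u, next (next u) ≠ u) : CycleDrawing next ℝ where
  start u := latticePoint (d.start u)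
  corner u := latticePoint (d.corner u)
  finish u := latticePoint (d.finish u)
  start_fst_injective := Int.cast_injective.comp d.start_fst_injective
  start_snd_injective := Int.cast_injective.comp d.start_snd_injective
  start_ne_corner u := latticePoint_injective.ne (d.start_ne_corner u)
  start_corner_axis u :=
    (d.start_corner_axis u).imp (congrArg Int.cast) (congrArg Int.cast)
  corner_finish_axis u :=
    (d.corner_finish_axis u).imp (congrArg Int.cast) (congrArg Int.cast)
  simple u p hp := by
    have hround {f : ℝ → ℤ} (hf : Monotone f) (hcast : ∀ z : ℤ, f z = z) :
        Prod.map f f p = d.corner u := by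
      have h := hp.imp (fun h => mapsTo_prodMap_uIcc hf _ _ h)
        (fun h => mapsTo_prodMap_uIcc hf _ _ h)
      simp only [prodMap_latticePoint hcast] at h
      exact d.simple u h
    exact eq_latticePoint (hround Int.floor_mono Int.floor_intCast)
      (hround Int.ceil_mono Int.ceil_intCast)
  finish_injective := latticePoint_injective.comp d.finish_injective
  finish_mem_next u := mapsTo_prodMap_bentPath Int.cast_mono _ _ _ (d.finish_mem_next u)
  eq_finish_of_mem {u v p} huv hu hv := by
    have hround {f : ℝ → ℤ} (hf : Monotone f) (hcast : ∀ z : ℤ, f z = z) :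
        v = next u ∧ Prod.map f f p = d.finish u ∨ u = next v ∧ Prod.map f f p = d.finish v := by
      have hu' := mapsTo_prodMap_bentPath hf _ _ _ hu
      have hv' := mapsTo_prodMap_bentPath hf _ _ _ hv
      simp only [prodMap_latticePoint hcast] at hu' hv'
      exact d.eq_finish_of_mem huv hu' hv'
    have hfloor := hround Int.floor_mono Int.floor_intCast
    have hceil := hround Int.ceil_mono Int.ceil_intCast
    rcases hfloor with ⟨hv, hfloor⟩ | ⟨hu, hfloor⟩ <;> rcases hceil with ⟨hv', hceil⟩ | ⟨hu', hceil⟩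
    · exact .inl ⟨hv, eq_latticePoint hfloor hceil⟩
    · exact (hnext u (hv ▸ hu'.symm)).elim
    · exact (hnext u (hv' ▸ hu.symm)).elim
    · exact .inr ⟨hu, eq_latticePoint hfloor hceil⟩

/-- The index of the highest horizontal path in the staircase drawing of a cycle of length `n`: the
largest even number below `n`. The paths with smaller index form the steps, horizontal for even and
vertical for odd indices; the path `stairTop n` leads back to the axis `x = 0`. -/
def stairTop (n : ℕ) : ℕ := 2 * ((n - 1) / 2)

/-- The start of the `i`th path in the staircase drawing of a cycle of length `n`. -/
def stairStart (n i : ℕ) : ℤ × ℤ :=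
  if i < stairTop n then if i % 2 = 0 then (i - 1, i) else (i + 1, i - 2)
  else if i = stairTop n then (i + 1, i) else (0, i)

/-- The point of the `i`th path of the staircase at which it may bend; only the last path of an odd
cycle does. -/
def stairCorner (n i : ℕ) : ℤ × ℤ :=
  if i < stairTop n then if i % 2 = 0 then (i + 2, i) else (i + 1, i + 1)
  else if i = stairTop n then (0, i) else (0, 0)

/-- The finish of the `i`th path of the staircase; the last path finishes at the origin, on the
lowest step. -/
def stairFinish (n i : ℕ) : ℤ × ℤ :=
  if i + 1 = n then (0, 0) else stairCorner n i

theorem mem_stair_iff {n i : ℕ} (hi : i < n) {p : ℤ × ℤ} :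
    p ∈ bentPath (stairStart n i) (stairCorner n i) (stairFinish n i) ↔
      (i < stairTop n ∧ i % 2 = 0 ∧ p.2 = i ∧ i - 1 ≤ p.1 ∧ p.1 ≤ i + 2) ∨
      (i < stairTop n ∧ i % 2 = 1 ∧ p.1 = i + 1 ∧ i - 2 ≤ p.2 ∧ p.2 ≤ i + 1) ∨
      (i = stairTop n ∧ p.2 = i ∧ 0 ≤ p.1 ∧ p.1 ≤ i + 1) ∨
      (i + 1 = n ∧ p.1 = 0 ∧ 0 ≤ p.2 ∧ p.2 ≤ i) := by
  have htop : stairTop n = 2 * ((n - 1) / 2) := rfl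
  simp only [bentPath, stairFinish, stairStart, stairCorner]
  split_ifs <;> first
    | exfalso; omega
    | simp (disch := omega) only [mem_union, uIcc_prod_eq, mem_prod, uIcc_of_le, uIcc_of_ge,
        mem_Icc]
      grind

theorem stairFinish_fst (n i : ℕ) : (stairFinish n i).1 =
    if i + 1 = n ∨ stairTop n ≤ i then 0 else if i % 2 = 0 then (i : ℤ) + 2 else i + 1 := by
  simp only [stairFinish, stairCorner]
  split_ifs <;> first | rfl | omega

theorem stairFinish_snd (n i : ℕ) : (stairFinish n i).2 =
    if i + 1 = n ∨ stairTop n < i then 0 else if i % 2 = 0 then (i : ℤ) else i + 1 := by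
  have htop : stairTop n = 2 * ((n - 1) / 2) := rfl
  simp only [stairFinish, stairCorner]
  split_ifs <;> first | rfl | omega

theorem stairFinish_injective (n : ℕ) :
    Function.Injective fun i : Fin (n + 3) => stairFinish (n + 3) i := by
  intro i j h
  have htop : stairTop (n + 3) = 2 * ((n + 2) / 2) := rfl
  rw [Prod.ext_iff, stairFinish_fst, stairFinish_fst, stairFinish_snd, stairFinish_snd] at h
  apply Fin.ext
  split_ifs at h <;> omega

theorem stairFinish_mem_next {n : ℕ} (i : Fin (n + 3)) :
    stairFinish (n + 3) i ∈ bentPath (stairStart (n + 3) ↑(i + 1)) (stairCorner (n + 3) ↑(i + 1))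
      (stairFinish (n + 3) ↑(i + 1)) := by
  have htop : stairTop (n + 3) = 2 * ((n + 2) / 2) := rfl
  rw [mem_stair_iff (i + 1).isLt, stairFinish_fst, stairFinish_snd, Fin.val_add_one]
  simp only [Fin.ext_iff, Fin.val_last]
  split_ifs <;> omega

theorem eq_stairFinish_of_mem {n : ℕ} {i j : Fin (n + 3)} {p : ℤ × ℤ} (hij : i ≠ j)
    (hi : p ∈ bentPath (stairStart (n + 3) i) (stairCorner (n + 3) i) (stairFinish (n + 3) i))
    (hj : p ∈ bentPath (stairStart (n + 3) j) (stairCorner (n + 3) j) (stairFinish (n + 3) j)) :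
    (j = i + 1 ∧ p = stairFinish (n + 3) i) ∨ (i = j + 1 ∧ p = stairFinish (n + 3) j) := by
  have htop : stairTop (n + 3) = 2 * ((n + 2) / 2) := rfl
  rw [mem_stair_iff i.isLt] at hi
  rw [mem_stair_iff j.isLt] at hj
  simp only [Fin.ext_iff, Prod.ext_iff, Fin.val_add_one, stairFinish_fst, stairFinish_snd,
    Fin.val_last]
  rcases hi with hi | hi | hi | hi <;> rcases hj with hj | hj | hj | hj <;> grind

/-- The staircase drawing of the cycle of length `n + 3`: steps climbing to the right, a horizontal
path back to the axis `x = 0` above them, and a way down this axis. -/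
def staircase (n : ℕ) : CycleDrawing (fun i : Fin (n + 3) => i + 1) ℤ where
  start i := stairStart (n + 3) i
  corner i := stairCorner (n + 3) i
  finish i := stairFinish (n + 3) i
  start_fst_injective i j h := by
    have htop : stairTop (n + 3) = 2 * ((n + 2) / 2) := rfl
    simp only [stairStart] at h
    apply Fin.ext
    split_ifs at h <;> dsimp only at h <;> omega
  start_snd_injective i j h := by
    have htop : stairTop (n + 3) = 2 * ((n + 2) / 2) := rfl
    simp only [stairStart] at h
    apply Fin.ext
    split_ifs at h <;> dsimp only at h <;> omega
  start_ne_corner i h := by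
    simp only [stairStart, stairCorner] at h
    split_ifs at h <;> rw [Prod.mk.injEq] at h <;> omega
  start_corner_axis i := by
    simp only [stairStart, stairCorner]
    split_ifs <;> simp
  corner_finish_axis i := by
    have htop : stairTop (n + 3) = 2 * ((n + 2) / 2) := rfl
    simp only [stairFinish, stairCorner]
    split_ifs <;> dsimp only <;> omega
  simple i p := by
    have htop : stairTop (n + 3) = 2 * ((n + 2) / 2) := rfl
    simp only [stairFinish, stairStart, stairCorner, mem_inter_iff, uIcc_prod_eq, mem_prod,
      mem_uIcc, mem_singleton_iff, Prod.ext_iff]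
    split_ifs <;> dsimp only <;> omega
  finish_injective := stairFinish_injective n
  finish_mem_next := stairFinish_mem_next
  eq_finish_of_mem := eq_stairFinish_of_mem

theorem corner_staircase {n : ℕ} {i : Fin (n + 3)} (hi : i ≠ Fin.last (n + 2)) :
    (staircase n).corner i = (staircase n).finish i :=
  (if_neg fun h => hi (Fin.ext (Nat.succ_injective h))).symm

/-! ### Strings below the drawing -/

/-- The point of height `h` above a point of the plane. -/
def liftTo (h : ℝ) (p : ℝ × ℝ) : Pt3 := ![p.1, p.2, h]

section Lifting

variable {h : ℝ} {p p' r : ℝ × ℝ} {q : Pt3}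

theorem eq_liftTo_iff : q = liftTo h p ↔ q 2 = h ∧ (q 0, q 1) = p := by
  refine ⟨fun hq => hq ▸ ⟨rfl, rfl⟩, fun ⟨h2, hp⟩ => ?_⟩
  subst h2 hp
  ext i
  fin_cases i <;> rfl

theorem liftTo_injective : Function.Injective (liftTo h) := fun _ _ hpq => (eq_liftTo_iff.1 hpq).2

theorem mem_uIcc_liftTo :
    q ∈ uIcc (liftTo h p) (liftTo h r) ↔ q 2 = h ∧ (q 0, q 1) ∈ uIcc p r := by
  rw [mem_uIcc_pt3, uIcc_prod_eq, mem_prod]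
  simp only [liftTo, Matrix.cons_val, uIcc_self, mem_singleton_iff]
  tauto

theorem mem_bentPath_liftTo :
    q ∈ bentPath (liftTo h p) (liftTo h p') (liftTo h r) ↔
      q 2 = h ∧ (q 0, q 1) ∈ bentPath p p' r := by
  simp only [bentPath, mem_union, mem_uIcc_liftTo, and_or_left]

theorem axisParallel_liftTo_sub (hpr : p.1 = r.1 ∨ p.2 = r.2) :
    AxisParallel (liftTo h r - liftTo h p) := by
  rcases hpr with hpr | hpr
  · exact ⟨1, fun j hj => by fin_cases j <;> simp_all [liftTo]⟩
  · exact ⟨0, fun j hj => by fin_cases j <;> simp_all [liftTo]⟩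

end Lifting

theorem isTraced_leg {x y z h : ℝ} (hz : h ≠ z) :
    IsTraced 1 ![x, y, h] ![x, y, z] (uIcc ![x, y, h] ![x, y, z]) :=
  .single (fun e => hz (congrFun e 2)) ⟨2, fun j hj => by fin_cases j <;> simp_all⟩

theorem isTraced_leg_union_bentPath {x y z h : ℝ} {t : Pt3} (hz : h ≠ z) (hy : y ≠ t 1)
    (ht : t 0 = x ∧ t 2 ≠ z ∨ t 0 ≠ x ∧ t 2 = z) :
    IsTraced 3 ![x, y, h] t
      (uIcc ![x, y, h] ![x, y, z] ∪ bentPath ![x, y, z] ![x, t 1, z] t) := by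
  have htip : IsTraced 1 ![x, t 1, z] t (uIcc ![x, t 1, z] t) := by
    refine .single (fun e => ?_) ?_
    · have h0 : t 0 = x := (congrFun e 0).symm
      have h2 : t 2 = z := (congrFun e 2).symm
      tauto
    · rcases ht with ⟨h0, -⟩ | ⟨-, h2⟩
      exacts [⟨2, fun j hj => by fin_cases j <;> simp_all⟩,
        ⟨0, fun j hj => by fin_cases j <;> simp_all⟩]
  have hshelf := htip.cons (p := ![x, y, z]) (fun e => hy (congrFun e 1))
    ⟨1, fun j hj => by fin_cases j <;> simp_all⟩ fun q hq => by
      simp only [mem_inter_iff, mem_uIcc_pt3] at hq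
      ext i
      fin_cases i <;> simp_all
  refine hshelf.cons (fun e => hz (congrFun e 2)) ⟨2, fun j hj => by fin_cases j <;> simp_all⟩
    fun q hq => ?_
  simp only [mem_inter_iff, mem_union, mem_uIcc_pt3] at hq
  obtain ⟨⟨h0, h1, -⟩, ⟨-, -, h2⟩ | ⟨-, h1', -⟩⟩ := hq
  · ext i
    fin_cases i <;> simp_all
  · simp_all

namespace CycleDrawing

variable {V : Type*} {next : V → V} (d : CycleDrawing next ℝ) (b : V → ℝ) (D : V → V → Prop)
  (h : ℝ) {u v w x : V} {q t : Pt3}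

/-- The abscissa of the start of the path of `u`; the part of the string of `u` below the
drawing begins over this point. -/
abbrev X (u : V) : ℝ := (d.start u).1

/-- The ordinate of the start of the path of `u`. -/
abbrev Y (u : V) : ℝ := (d.start u).2

/-- For an arc `u → v`, the point `t` at which the string of `u` ends on the string of `v`. If the
arc descends, then `t` is on the leg of `v`; otherwise it is on the horizontal segment along which
the string of `v` approaches the leg of `c`, where `v → c`. -/
def IsTip (u v : V) (t : Pt3) : Prop :=
  D u v ∧ (b v < b u ∧ t = ![d.X v, d.Y v, b u] ∨
    b u < b v ∧ ∃ c, D v c ∧ t = ![d.X u, d.Y c, b v])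

/-- The vertical segment below the start of the path of `u`, from height `h` down to the level of
`u`. -/
def leg (u : V) : Set Pt3 := uIcc ![d.X u, d.Y u, h] ![d.X u, d.Y u, b u]

/-- The part of the string of `u` that leads from the foot of its leg to its tip, if any. -/
def foot (u : V) : Set Pt3 :=
  {q | ∃ v t, d.IsTip b D u v t ∧
    q ∈ bentPath ![d.X u, d.Y u, b u] ![d.X u, t 1, b u] t}

/-- The string of `u`: its path in the drawing, lifted to height `h`, followed by leg and foot. -/
def strand (u : V) : Set Pt3 :=
  bentPath (liftTo h (d.start u)) (liftTo h (d.corner u)) (liftTo h (d.finish u)) ∪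
    (d.leg b h u ∪ d.foot b D u)

/-- The string of `u` ends at `q` on the string of `v`. -/
def EndsOn (u v : V) (q : Pt3) : Prop :=
  v = next u ∧ q = liftTo h (d.finish u) ∨ d.IsTip b D u v q

section Tip

variable {d b D h} {H : SimpleGraph V} (hD : IsLevelledOrientation H d.X b D)
include hD

theorem exists_isTip (huv : D u v) : ∃ t, d.IsTip b D u v t := by
  rcases hD.descends_or_passesOver huv with hlt | ⟨hlt, c, hvc, -⟩
  exacts [⟨_, huv, .inl ⟨hlt, rfl⟩⟩, ⟨_, huv, .inr ⟨hlt, c, hvc, rfl⟩⟩]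

theorem isTip_unique (ht : d.IsTip b D u v t) (hq : d.IsTip b D u w q) : v = w ∧ t = q := by
  obtain ⟨huv, ht⟩ := ht
  obtain ⟨huw, hq⟩ := hq
  obtain rfl := hD.right_unique huv huw
  refine ⟨rfl, ?_⟩
  rcases ht with ⟨hlt, rfl⟩ | ⟨hlt, c, hvc, rfl⟩ <;>
    rcases hq with ⟨hlt', rfl⟩ | ⟨hlt', c', hvc', rfl⟩
  · rfl
  · exact (hlt.not_gt hlt').elim
  · exact (hlt.not_gt hlt').elim
  · rw [hD.right_unique hvc hvc']

theorem ne_of_descends_of_ascends {c : V} (huv : D u v) (hwx : D w x) (hlt : b w < b x)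
    (hxc : D x c) : (![d.X v, d.Y v, b u] : Pt3) ≠ ![d.X w, d.Y c, b x] := by
  intro e
  obtain rfl := hD.level_injective (congrFun e 2)
  obtain rfl := hD.right_unique huv hxc
  exact (hD.passesOver hwx hlt huv).2.1.ne (congrFun e 0)

theorem isTip_injective (ht : d.IsTip b D u v t) (ht' : d.IsTip b D w x t) : u = w := by
  obtain ⟨huv, ⟨-, rfl⟩ | ⟨hlt, c, hvc, rfl⟩⟩ := ht <;>
    obtain ⟨hwx, ⟨-, e⟩ | ⟨hlt', c', hxc, e⟩⟩ := ht'
  · exact hD.level_injective (congrFun e 2)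
  · exact (ne_of_descends_of_ascends hD huv hwx hlt' hxc e).elim
  · exact (ne_of_descends_of_ascends hD hwx huv hlt hvc e.symm).elim
  · exact d.start_fst_injective (congrFun e 0)

theorem isTip_mem_strand (hh : ∀ u, b u < h) (ht : d.IsTip b D u v t) : t ∈ d.strand b D h v := by
  obtain ⟨huv, ⟨hlt, rfl⟩ | ⟨hlt, c, hvc, rfl⟩⟩ := ht
  · refine .inr (.inl (mem_uIcc_pt3.2 ⟨left_mem_uIcc, left_mem_uIcc, ?_⟩))
    exact mem_uIcc.2 (.inr ⟨hlt.le, (hh u).le⟩)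
  · obtain ⟨hcv, hcu, huv'⟩ := hD.passesOver huv hlt hvc
    exact .inr (.inr ⟨c, _, ⟨hvc, .inl ⟨hcv, rfl⟩⟩, .inr (mem_uIcc_pt3.2
      ⟨mem_uIcc.2 (.inr ⟨hcu.le, huv'.le⟩), left_mem_uIcc, left_mem_uIcc⟩)⟩)

end Tip

theorem mem_foot_of_isTip (ht : d.IsTip b D u v t) : t ∈ d.foot b D u :=
  ⟨v, t, ht, .inr right_mem_uIcc⟩

/-- At `q` the string of `u` runs in the plane `x = X u`. -/
def OnWall (u : V) (q : Pt3) : Prop :=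
  q 0 = d.X u ∧ (q 1 = d.Y u ∨ q 2 = b u ∨ ∃ v c, D u v ∧ b u < b v ∧ D v c ∧ q 1 = d.Y c)

/-- At `q` the string of `u` runs at its own level towards the leg of some `v`. -/
def OnShelf (u : V) (q : Pt3) : Prop :=
  q 2 = b u ∧ ∃ v, D u v ∧ b v < b u ∧ q 1 = d.Y v

variable {d b D h}

theorem onWall_or_onShelf (hq : q ∈ d.leg b h u ∪ d.foot b D u) :
    d.OnWall b D u q ∨ d.OnShelf b D u q := by
  rcases hq with hq | ⟨v, t, ⟨huv, ⟨hlt, rfl⟩ | ⟨hlt, c, hvc, rfl⟩⟩, hq | hq⟩ <;>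
    simp only [leg, mem_uIcc_pt3, Matrix.cons_val, uIcc_self, mem_singleton_iff] at hq
  · exact .inl ⟨hq.1, .inl hq.2.1⟩
  · exact .inl ⟨hq.1, .inr (.inl hq.2.2)⟩
  · exact .inr ⟨hq.2.2, v, huv, hlt, hq.2.1⟩
  · exact .inl ⟨hq.1, .inr (.inl hq.2.2)⟩
  · exact .inl ⟨hq.1, .inr (.inr ⟨v, c, huv, hlt, hvc, hq.2.1⟩)⟩

section Contacts

variable {H : SimpleGraph V} (hD : IsLevelledOrientation H d.X b D)
include hD

theorem isTip_of_onWall_of_onShelf (huv : u ≠ v) (hu : d.OnWall b D u q)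
    (hv : d.OnShelf b D v q) : d.IsTip b D u v q ∨ d.IsTip b D v u q := by
  obtain ⟨h0, h1⟩ := hu
  obtain ⟨h2, w, hvw, hlt, h1'⟩ := hv
  rcases h1 with h1 | h2' | ⟨x, c, hux, hlt', hxc, h1⟩
  · obtain rfl : u = w := d.start_snd_injective (h1.symm.trans h1')
    refine .inr ⟨hvw, .inl ⟨hlt, ?_⟩⟩
    ext i
    fin_cases i <;> assumption
  · exact (huv (hD.level_injective (h2'.symm.trans h2))).elim
  · obtain rfl : c = w := d.start_snd_injective (h1.symm.trans h1')
    obtain rfl := hD.left_unique hxc hvw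
    refine .inl ⟨hux, .inr ⟨hlt', c, hxc, ?_⟩⟩
    ext i
    fin_cases i <;> assumption

theorem isTip_of_mem_of_mem (huv : u ≠ v) (hu : q ∈ d.leg b h u ∪ d.foot b D u)
    (hv : q ∈ d.leg b h v ∪ d.foot b D v) : d.IsTip b D u v q ∨ d.IsTip b D v u q := by
  rcases onWall_or_onShelf hu with hu | hu <;> rcases onWall_or_onShelf hv with hv | hv
  · exact (huv (d.start_fst_injective (hu.1.symm.trans hv.1))).elim
  · exact isTip_of_onWall_of_onShelf hD huv hu hv
  · exact (isTip_of_onWall_of_onShelf hD huv.symm hv hu).symm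
  · exact (huv (hD.level_injective (hu.1.symm.trans hv.1))).elim

end Contacts

section Top

variable (hh : ∀ u, b u < h)
include hh

theorem IsTip.lt_top (ht : d.IsTip b D u v t) : t 2 < h := by
  obtain ⟨-, ⟨-, rfl⟩ | ⟨-, c, -, rfl⟩⟩ := ht
  exacts [hh u, hh v]

theorem eq_liftTo_start (hq : q ∈ d.leg b h u ∪ d.foot b D u) (hq2 : q 2 = h) :
    q = liftTo h (d.start u) := by
  rcases hq with hq | ⟨v, t, ht, hq⟩
  · rw [leg, mem_uIcc_pt3] at hq
    exact eq_liftTo_iff.2 ⟨hq2, Prod.ext (by simpa using hq.1) (by simpa using hq.2.1)⟩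
  · have ht2 := ht.lt_top hh
    have hu := hh u
    rcases hq with hq | hq
    · have h2 : q 2 = b u := by simpa using (mem_uIcc_pt3.1 hq).2.2
      exact (hu.ne (h2.symm.trans hq2)).elim
    · have h2 : q 2 ≤ max (b u) (t 2) := (mem_uIcc_pt3.1 hq).2.2.2
      exact absurd (hq2 ▸ h2) (max_lt hu ht2).not_ge

theorem mem_bentPath_of_mem_strand (hq : q ∈ d.strand b D h u) (hq2 : q 2 = h) :
    (q 0, q 1) ∈ bentPath (d.start u) (d.corner u) (d.finish u) := by
  rcases hq with hq | hq
  · exact (mem_bentPath_liftTo.1 hq).2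
  · rw [(eq_liftTo_iff.1 (eq_liftTo_start hh hq hq2)).2]
    exact .inl left_mem_uIcc

end Top

section Strands

variable {H : SimpleGraph V} (hD : IsLevelledOrientation H d.X b D) (hh : ∀ u, b u < h)

theorem EndsOn.mem_strand_left (hq : d.EndsOn b D h u v q) : q ∈ d.strand b D h u := by
  rcases hq with ⟨-, rfl⟩ | ht
  exacts [.inl (.inr right_mem_uIcc), .inr (.inr (d.mem_foot_of_isTip b D ht))]

include hh

include hD in
theorem EndsOn.mem_strand_right (hq : d.EndsOn b D h u v q) : q ∈ d.strand b D h v := by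
  rcases hq with ⟨rfl, rfl⟩ | ht
  exacts [.inl (mem_bentPath_liftTo.2 ⟨rfl, d.finish_mem_next u⟩), isTip_mem_strand hD hh ht]

include hD in
theorem endsOn_of_mem_strand (huv : u ≠ v) (hu : q ∈ d.strand b D h u)
    (hv : q ∈ d.strand b D h v) : d.EndsOn b D h u v q ∨ d.EndsOn b D h v u q := by
  by_cases hq : q 2 = h
  · exact (d.eq_finish_of_mem huv (mem_bentPath_of_mem_strand hh hu hq)
      (mem_bentPath_of_mem_strand hh hv hq)).imp
      (fun ⟨hvu, he⟩ => .inl ⟨hvu, eq_liftTo_iff.2 ⟨hq, he⟩⟩)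
      (fun ⟨huv, he⟩ => .inl ⟨huv, eq_liftTo_iff.2 ⟨hq, he⟩⟩)
  · have hbelow {w : V} (hw : q ∈ d.strand b D h w) : q ∈ d.leg b h w ∪ d.foot b D w :=
      hw.resolve_left fun hw => hq (mem_bentPath_liftTo.1 hw).1
    exact (isTip_of_mem_of_mem hD huv (hbelow hu) (hbelow hv)).imp .inr .inr

include hD in
theorem EndsOn.unique (hq : d.EndsOn b D h u v q) (hq' : d.EndsOn b D h w x q) :
    u = w ∧ v = x := by
  rcases hq with ⟨rfl, rfl⟩ | ht <;> rcases hq' with ⟨rfl, e⟩ | ht'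
  · obtain rfl := d.finish_injective (liftTo_injective e)
    exact ⟨rfl, rfl⟩
  · exact ((ht'.lt_top hh).ne rfl).elim
  · exact ((ht.lt_top hh).ne (eq_liftTo_iff.1 e).1).elim
  · obtain rfl := isTip_injective hD ht ht'
    exact ⟨rfl, (isTip_unique hD ht ht').1⟩

end Strands

section Tracing

variable {H : SimpleGraph V} (hD : IsLevelledOrientation H d.X b D) (hh : ∀ u, b u < h)
include hD

theorem foot_eq_bentPath_of_isTip (ht : d.IsTip b D u v t) :
    d.foot b D u = bentPath ![d.X u, d.Y u, b u] ![d.X u, t 1, b u] t := by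
  ext q
  refine ⟨fun ⟨w, s, hs, hq⟩ => ?_, fun hq => ⟨v, t, ht, hq⟩⟩
  rwa [(isTip_unique hD ht hs).2]

theorem IsTip.turns (ht : d.IsTip b D u v t) :
    d.Y u ≠ t 1 ∧ (t 0 = d.X u ∧ t 2 ≠ b u ∨ t 0 ≠ d.X u ∧ t 2 = b u) := by
  obtain ⟨huv, ⟨-, rfl⟩ | ⟨hlt, c, hvc, rfl⟩⟩ := ht
  · have hne : u ≠ v := hD.ne huv
    exact ⟨d.start_snd_injective.ne hne, .inr ⟨d.start_fst_injective.ne hne.symm, rfl⟩⟩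
  · have hne : u ≠ c := fun huc => hD.asymm huv (huc ▸ hvc)
    exact ⟨d.start_snd_injective.ne hne, .inl ⟨rfl, hlt.ne'⟩⟩

include hh

theorem exists_isTraced_leg_union_foot (u : V) : ∃ k ≤ 3, ∃ e,
    IsTraced k (liftTo h (d.start u)) e (d.leg b h u ∪ d.foot b D u) ∧
      ∀ v t, d.IsTip b D u v t → e = t := by
  by_cases hu : ∃ v t, d.IsTip b D u v t
  · obtain ⟨v, t, ht⟩ := hu
    rw [foot_eq_bentPath_of_isTip hD ht]
    obtain ⟨hy, hturn⟩ := ht.turns hD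
    exact ⟨3, le_rfl, t, isTraced_leg_union_bentPath (hh u).ne' hy hturn,
      fun w s hs => (isTip_unique hD ht hs).2⟩
  · push Not at hu
    have hfoot : d.foot b D u = ∅ :=
      eq_empty_of_forall_notMem fun q ⟨v, t, ht, _⟩ => hu v t ht
    rw [hfoot, union_empty]
    exact ⟨1, by simp, _, isTraced_leg (hh u).ne', fun v t ht => (hu v t ht).elim⟩

theorem exists_isTraced_strand (u : V) : ∃ k ≤ 5, ∃ e,
    IsTraced k (liftTo h (d.finish u)) e (d.strand b D h u) ∧
      (∀ v t, d.IsTip b D u v t → e = t) ∧ (d.corner u = d.finish u → k ≤ 4) := by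
  obtain ⟨k, hk, e, hlow, he⟩ := exists_isTraced_leg_union_foot hD hh u
  have hmid := hlow.cons (liftTo_injective.ne (d.start_ne_corner u).symm)
    (axisParallel_liftTo_sub ((d.start_corner_axis u).imp Eq.symm Eq.symm))
    fun q hq => eq_liftTo_start hh hq.2 (mem_uIcc_liftTo.1 hq.1).1
  by_cases hcf : d.corner u = d.finish u
  · refine ⟨k + 1, by omega, e, ?_, he, fun _ => by omega⟩
    convert hmid using 1
    · rw [hcf]
    · rw [strand, bentPath, hcf, uIcc_self, uIcc_comm, union_singleton,
        insert_eq_of_mem left_mem_uIcc]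
  · refine ⟨k + 2, by omega, e, ?_, he, fun h => (hcf h).elim⟩
    have hstrand : d.strand b D h u = uIcc (liftTo h (d.finish u)) (liftTo h (d.corner u)) ∪
        (uIcc (liftTo h (d.corner u)) (liftTo h (d.start u)) ∪
          (d.leg b h u ∪ d.foot b D u)) := by
      rw [strand, bentPath, union_comm (uIcc _ _), union_assoc, uIcc_comm (liftTo h (d.start u)),
        uIcc_comm (liftTo h (d.finish u))]
    rw [hstrand]
    refine hmid.cons (liftTo_injective.ne (Ne.symm hcf))
      (axisParallel_liftTo_sub ((d.corner_finish_axis u).imp Eq.symm Eq.symm)) fun q hq => ?_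
    obtain ⟨hq2, hqtop⟩ := mem_uIcc_liftTo.1 hq.1
    refine eq_liftTo_iff.2 ⟨hq2, d.simple u ⟨?_, hqtop⟩⟩
    rcases hq.2 with hmid | hlow
    · exact (mem_uIcc_liftTo.1 hmid).2
    · rw [(eq_liftTo_iff.1 (eq_liftTo_start hh hlow hq2)).2]
      exact right_mem_uIcc

end Tracing

theorem exists_endsOn_iff {H : SimpleGraph V} (hD : IsLevelledOrientation H d.X b D) :
    (∃ q, d.EndsOn b D h u v q) ↔ v = next u ∨ D u v := by
  constructor
  · rintro ⟨q, ⟨hvu, -⟩ | ht⟩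
    exacts [.inl hvu, .inr ht.1]
  · rintro (hvu | huv)
    · exact ⟨_, .inl ⟨hvu, rfl⟩⟩
    · exact (exists_isTip hD huv).imp fun _ => .inr

theorem strand_inter_nonempty_iff {H : SimpleGraph V} (hD : IsLevelledOrientation H d.X b D)
    (hh : ∀ u, b u < h) (huv : u ≠ v) :
    (d.strand b D h u ∩ d.strand b D h v).Nonempty ↔ H.Adj u v ∨ v = next u ∨ u = next v := by
  have hends : (d.strand b D h u ∩ d.strand b D h v).Nonempty ↔
      (∃ q, d.EndsOn b D h u v q) ∨ ∃ q, d.EndsOn b D h v u q := by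
    rw [← exists_or]
    refine exists_congr fun q => ⟨fun hq => endsOn_of_mem_strand hD hh huv hq.1 hq.2, ?_⟩
    rintro (hq | hq)
    exacts [⟨hq.mem_strand_left, hq.mem_strand_right hD hh⟩,
      ⟨hq.mem_strand_right hD hh, hq.mem_strand_left⟩]
  rw [hends, exists_endsOn_iff hD, exists_endsOn_iff hD, hD.adj_iff]
  tauto

theorem exists_stringContactRep [Finite V] {G H : SimpleGraph V}
    (hG : ∀ u v, G.Adj u v ↔ H.Adj u v ∨ v = next u ∨ u = next v)
    (hdeg : ∀ u, (H.neighborSet u).ncard ≤ 2) :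
    ∃ Ψ : V → AAString, IsStringContactRep G Ψ ∧ (∀ v, (Ψ v).bends ≤ 4) ∧
      ∀ v, d.corner v = d.finish v → (Ψ v).bends ≤ 3 := by
  obtain ⟨b, D, hD⟩ := exists_isLevelledOrientation d.start_fst_injective hdeg
  obtain ⟨M, hM⟩ := Set.finite_range b |>.bddAbove
  obtain ⟨h, hMh⟩ := exists_gt M
  have hh (u : V) : b u < h := (hM (mem_range_self u)).trans_lt hMh
  choose k hk5 e htraced htip hk4 using exists_isTraced_strand hD hh
  choose Ψ hk hstart hend hcarrier using htraced
  have hendpoint {u v : V} {q : Pt3} (hq : d.EndsOn b D h u v q) : q ∈ (Ψ u).endpoints := by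
    rcases hq with ⟨-, rfl⟩ | ht
    exacts [.inl (hstart u).symm, .inr ((htip u v q ht).symm.trans (hend u).symm)]
  refine ⟨Ψ, ⟨fun u v huv q hq => ?_, fun u v w huv huw hvw q hq => ?_, fun u v huv => ?_⟩,
    fun v => ?_, fun v hv => ?_⟩
  · rw [hcarrier, hcarrier] at hq
    exact (endsOn_of_mem_strand hD hh huv hq.1 hq.2).imp hendpoint hendpoint
  · simp only [hcarrier] at hq
    obtain ⟨hu, hv, hw⟩ := hq
    rcases endsOn_of_mem_strand hD hh huv hu hv with huv' | hvu' <;>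
      rcases endsOn_of_mem_strand hD hh huw hu hw with huw' | hwu'
    · exact hvw (huv'.unique hD hh huw').2
    · exact huw (huv'.unique hD hh hwu').1
    · exact huw (hvu'.unique hD hh huw').2
    · exact hvw (hvu'.unique hD hh hwu').1
  · rw [hcarrier, hcarrier, hG, strand_inter_nonempty_iff hD hh huv]
  · rw [AAString.bends, hk]
    exact Nat.sub_le_of_le_add (hk5 v)
  · rw [AAString.bends, hk]
    exact Nat.sub_le_of_le_add (hk4 v hv)

end CycleDrawing

/-! ### Hamiltonian graphs -/

theorem exists_stringContactRep_of_subsingleton {V : Type*} [Subsingleton V]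
    (G : SimpleGraph V) : ∃ Ψ : V → AAString, IsStringContactRep G Ψ ∧ ∀ v, (Ψ v).bends = 0 := by
  have hne : (0 : Pt3) ≠ Pi.single 0 1 := (Pi.single_ne_zero_iff.2 one_ne_zero).symm
  refine ⟨fun _ => .single 0 _ hne ⟨0, fun j hj => by simp [hj]⟩, ?_, fun _ => rfl⟩
  exact ⟨fun _ _ huv => (huv (Subsingleton.elim _ _)).elim,
    fun _ _ _ huv => (huv (Subsingleton.elim _ _)).elim,
    fun _ _ huv => (huv (Subsingleton.elim _ _)).elim⟩

theorem IsStringContactRep.comp {V W : Type*} {G : SimpleGraph V} {Ψ : V → AAString}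
    (hΨ : IsStringContactRep G Ψ) {f : W → V} (hf : Function.Injective f) :
    IsStringContactRep (G.comap f) (Ψ ∘ f) :=
  ⟨fun _ _ huv => hΨ.1 _ _ (hf.ne huv),
    fun _ _ _ huv huw hvw => hΨ.2.1 _ _ _ (hf.ne huv) (hf.ne huw) (hf.ne hvw),
    fun _ _ huv => hΨ.2.2 _ _ (hf.ne huv)⟩

theorem ncard_neighborSet_sdiff_cycleGraph {n : ℕ} {G : SimpleGraph (Fin (n + 3))}
    (hG : SimpleGraph.cycleGraph (n + 3) ≤ G) {u : Fin (n + 3)} {k : ℕ}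
    (hdeg : (G.neighborSet u).ncard ≤ k + 2) :
    ((G \ SimpleGraph.cycleGraph (n + 3)).neighborSet u).ncard ≤ k := by
  have hcycle : ((SimpleGraph.cycleGraph (n + 3)).neighborSet u).ncard = 2 := by
    rw [← Nat.card_coe_set_eq, Nat.card_eq_fintype_card, SimpleGraph.card_neighborSet_eq_degree,
      SimpleGraph.cycleGraph_degree_three_le]
  have hle : (SimpleGraph.cycleGraph (n + 3)).neighborSet u ⊆ G.neighborSet u := fun v hv => hG hv
  rw [SimpleGraph.neighborSet_sdiff, ncard_sdiff hle, hcycle]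
  exact Nat.sub_le_of_le_add hdeg

theorem exists_stringContactRep_of_cycleGraph_le {n : ℕ} {G : SimpleGraph (Fin (n + 3))}
    (hG : SimpleGraph.cycleGraph (n + 3) ≤ G) (hdeg : ∀ u, (G.neighborSet u).ncard ≤ 4) :
    ∃ Ψ : Fin (n + 3) → AAString, IsStringContactRep G Ψ ∧ (∀ v, (Ψ v).bends ≤ 4) ∧
      ∃ v₀, ∀ v, v ≠ v₀ → (Ψ v).bends ≤ 3 := by
  have hnext (u : Fin (n + 3)) : u + 1 + 1 ≠ u := by
    rw [add_assoc, add_ne_left, Ne, Fin.ext_iff, Fin.val_add]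
    simp [Nat.mod_eq_of_lt (show 2 < n + 3 by omega)]
  have hadj (u v : Fin (n + 3)) : G.Adj u v ↔
      (G \ SimpleGraph.cycleGraph (n + 3)).Adj u v ∨ v = u + 1 ∨ u = v + 1 := by
    have hcycle : (SimpleGraph.cycleGraph (n + 3)).Adj u v ↔ v = u + 1 ∨ u = v + 1 := by
      rw [SimpleGraph.cycleGraph_adj, or_comm, sub_eq_iff_eq_add', sub_eq_iff_eq_add']
    rw [← hcycle, SimpleGraph.sdiff_adj]
    have := @hG u v
    tauto
  obtain ⟨Ψ, hΨ, h4, h3⟩ := ((staircase n).toReal hnext).exists_stringContactRep hadj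
    fun u => ncard_neighborSet_sdiff_cycleGraph hG (hdeg u)
  exact ⟨Ψ, hΨ, h4, Fin.last (n + 2),
    fun v hv => h3 v (congrArg latticePoint (corner_staircase hv))⟩

theorem exists_equiv_cycleGraph_le_comap {V : Type*} [Fintype V] [DecidableEq V]
    {G : SimpleGraph V} (hham : G.IsHamiltonian) (hV : Fintype.card V ≠ 1) :
    ∃ n, ∃ f : Fin (n + 3) ≃ V, SimpleGraph.cycleGraph (n + 3) ≤ G.comap f := by
  obtain ⟨a, p, hp⟩ := hham hV
  have hlen : 3 ≤ Fintype.card V := hp.length_eq ▸ hp.isCycle.three_le_length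
  obtain ⟨n, hn⟩ := Nat.exists_eq_add_of_le' hlen
  have hcycle : (SimpleGraph.cycleGraph (n + 3)).IsContained G :=
    (SimpleGraph.cycleGraph_isContained_iff (by omega)).2
      ⟨a, p, hp.isCycle, hp.length_eq.trans hn⟩
  obtain ⟨f, hf⟩ := hcycle
  have hbij : Function.Bijective f :=
    (Fintype.bijective_iff_injective_and_card f).2 ⟨hf, by rw [Fintype.card_fin, hn]⟩
  exact ⟨n, .ofBijective f hbij, fun _ _ => f.map_adj⟩

theorem triangleFree_hamiltonian_maxDegFour_stringContactRep_general
    {V : Type*} [Fintype V] [DecidableEq V]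
    (G : SimpleGraph V) [DecidableRel G.Adj] (hham : G.IsHamiltonian)
    (hdeg : ∀ v : V, G.degree v ≤ 4) :
    ∃ Ψ : V → AAString, IsStringContactRep G Ψ ∧ (∀ v : V, (Ψ v).bends ≤ 4) ∧
      ∃ v₀ : V, ∀ v : V, v ≠ v₀ → (Ψ v).bends ≤ 3 := by
  by_cases hV : Fintype.card V = 1
  · obtain ⟨v₀, hv₀⟩ := Fintype.card_eq_one_iff.1 hV
    have : Subsingleton V := ⟨fun u v => (hv₀ u).trans (hv₀ v).symm⟩
    obtain ⟨Ψ, hΨ, h0⟩ := exists_stringContactRep_of_subsingleton G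
    exact ⟨Ψ, hΨ, fun v => by simp [h0], v₀, fun v _ => by simp [h0]⟩
  obtain ⟨n, f, hcycle⟩ := exists_equiv_cycleGraph_le_comap hham hV
  have hdeg' (i : Fin (n + 3)) : ((G.comap f).neighborSet i).ncard ≤ 4 := by
    rw [SimpleGraph.neighborSet_comap, ncard_preimage_of_injective_subset_range f.injective
      (by simp), ← Nat.card_coe_set_eq, Nat.card_eq_fintype_card,
      SimpleGraph.card_neighborSet_eq_degree]
    exact hdeg (f i)
  obtain ⟨Ψ, hΨ, h4, i₀, h3⟩ := exists_stringContactRep_of_cycleGraph_le hcycle hdeg'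
  refine ⟨Ψ ∘ f.symm, ?_, fun v => h4 _, f i₀, fun v hv => h3 _ fun h => hv (f.symm_apply_eq.1 h)⟩
  simpa [SimpleGraph.comap_comap] using hΨ.comp f.symm.injective

/-- Every finite triangle-free Hamiltonian simple graph with maximum degree at most 4
admits a string contact representation in ℝ³ in which every string is a `B₄`-string
and all strings except at most one are `B₃`-strings. -/
theorem triangleFree_hamiltonian_maxDegFour_stringContactRep
    {V : Type*} [Fintype V] [DecidableEq V]
    (G : SimpleGraph V) [DecidableRel G.Adj]
    (htf : G.CliqueFree 3) (hham : G.IsHamiltonian)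
    (hdeg : ∀ v : V, G.degree v ≤ 4) :
    ∃ Ψ : V → AAString, IsStringContactRep G Ψ ∧ (∀ v : V, (Ψ v).bends ≤ 4) ∧
      ∃ v₀ : V, ∀ v : V, v ≠ v₀ → (Ψ v).bends ≤ 3 := by
  exact triangleFree_hamiltonian_maxDegFour_stringContactRep_general G hham hdeg
end
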